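/- Let m ≥ 1 and let n₀ : ℝ^m → ℝ and v₀ : ℝ^m → ℝ^m be real-analytic functions that are ℤ^m-periodic (i.e., invariant under translation by every vector of ℤ^m). Then there exist ε > 0 and functions n : (−ε,ε) × ℝ^m → ℝ, v : (−ε,ε) × ℝ^m → ℝ^m and φ : (−ε,ε) × ℝ^m → ℝ, each real-analytic jointly in (t,x) and ℤ^m-periodic in x, such that for all (t,x): ∂ₜn + div(n·v) = 0, ∂ₜv + (v·∇)v + grad φ = 0, and Δφ − φ + n = 0, with n(0,·) = n₀ and v(0,·) = v₀; moreover the pair (n,v) is unique among such real-analytic solutions. -/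

import Mathlib

/-- The property of being a real-analytic, `ℤ^m`-periodic-in-space solution
`(n, v, φ)` of the (local form of the) modified Euler–Poisson system on the time
interval `(−ε, ε)`, with initial data `(n₀, v₀)`.  Here the time derivative of a
function `f` on `ℝ × ℝ^m` is `fderiv ℝ f p (1, 0)`, the `i`-th spatial partial
derivative is `fderiv ℝ f p (0, EuclideanSpace.single i 1)`, and `(v·∇)` acts in
the direction `(0, v p)`. -/
def IsAnalyticMEPSolution (m : ℕ) (ε : ℝ)
    (n₀ : EuclideanSpace ℝ (Fin m) → ℝ)
    (v₀ : EuclideanSpace ℝ (Fin m) → EuclideanSpace ℝ (Fin m))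
    (n φ : ℝ × EuclideanSpace ℝ (Fin m) → ℝ)
    (v : ℝ × EuclideanSpace ℝ (Fin m) → EuclideanSpace ℝ (Fin m)) : Prop :=
  -- joint real-analyticity in (t, x) on (−ε, ε) × ℝ^m
  (∀ p : ℝ × EuclideanSpace ℝ (Fin m), p.1 ∈ Set.Ioo (-ε) ε →
      AnalyticAt ℝ n p ∧ AnalyticAt ℝ v p ∧ AnalyticAt ℝ φ p) ∧
  -- ℤ^m-periodicity in the space variable
  (∀ (t : ℝ) (x : EuclideanSpace ℝ (Fin m)) (z : Fin m → ℤ),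
      n (t, x + (WithLp.equiv 2 (Fin m → ℝ)).symm fun i => (z i : ℝ)) = n (t, x) ∧
      v (t, x + (WithLp.equiv 2 (Fin m → ℝ)).symm fun i => (z i : ℝ)) = v (t, x) ∧
      φ (t, x + (WithLp.equiv 2 (Fin m → ℝ)).symm fun i => (z i : ℝ)) = φ (t, x)) ∧
  -- ∂ₜ n + div (n v) = 0
  (∀ p : ℝ × EuclideanSpace ℝ (Fin m), p.1 ∈ Set.Ioo (-ε) ε →
      fderiv ℝ n p (1, 0) +
        ∑ i : Fin m, fderiv ℝ (fun q => n q * v q i) p (0, EuclideanSpace.single i 1) = 0) ∧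
  -- ∂ₜ v + (v·∇)v + grad φ = 0 (componentwise)
  (∀ p : ℝ × EuclideanSpace ℝ (Fin m), p.1 ∈ Set.Ioo (-ε) ε → ∀ j : Fin m,
      fderiv ℝ (fun q => v q j) p (1, 0) +
        fderiv ℝ (fun q => v q j) p ((0 : ℝ), v p) +
        fderiv ℝ φ p (0, EuclideanSpace.single j 1) = 0) ∧
  -- Δφ − φ + n = 0
  (∀ p : ℝ × EuclideanSpace ℝ (Fin m), p.1 ∈ Set.Ioo (-ε) ε →
      (∑ i : Fin m,
          fderiv ℝ (fun q => fderiv ℝ φ q (0, EuclideanSpace.single i 1)) p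
            (0, EuclideanSpace.single i 1)) - φ p + n p = 0) ∧
  -- initial data
  (∀ x : EuclideanSpace ℝ (Fin m), n (0, x) = n₀ x ∧ v (0, x) = v₀ x)

/-!
Write the solution as a Fourier–Taylor series `∑ A k ξ t ^ k exp (2 π i ξ · x)`. The equation then
becomes a recursion for the Taylor coefficients `A k`, and `Λ⁻² = (1 - Δ)⁻¹` is the multiplier
`1 / (1 + 4 π² |ξ|²)`. Measure `A k` in the norms `∑ |a ξ| exp (s |ξ|)`: they are submultiplicative
for products, and a spatial derivative costs a factor `1 / δ` when the width `s` is lowered by `δ`.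
Spending the available width in `k + 1` equal parts makes the `k`-th step cost `k + 1`, which the
time integration gives back as `1 / (k + 1)`. What remains is the convolution recursion of the
Catalan numbers, so `A k` grows at most geometrically.

For uniqueness, differentiating the equations in time at `t = 0` shows that two solutions which
agree there to order `k` agree to order `k + 1`: the density determines the potential at each order
by the maximum principle for `Δ - 1` on the torus. The identity theorem in `t` does the rest.
-/

namespace ModifiedEulerPoisson

open Finset
open scoped ENNReal NNReal

/-! ### Sums of power series -/

section PowerSeries

variable {E : Type*} [NormedAddCommGroup E] [NormedSpace ℝ E]

lemma hasFPowerSeriesOnBall_tsum {ι F : Type*} [NormedAddCommGroup F] [NormedSpace ℝ F]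
    [CompleteSpace F] {f : ι → E → F} {p : ι → ∀ n, E [×n]→L[ℝ] F} {x : E} {r : ℝ≥0}
    (hr : 0 < r) (hp : ∑' i, ∑' n, ENNReal.ofReal (‖p i n‖ * r ^ n) ≠ ∞)
    (hf : ∀ i y, HasSum (fun n => p i n fun _ => y) (f i (x + y))) :
    HasFPowerSeriesOnBall (fun z => ∑' i, f i z) (fun n => ∑' i, p i n) x r := by
  have hsum : Summable fun z : ℕ × ι => ‖p z.2 z.1‖ * (r : ℝ) ^ z.1 := by
    rw [← ENNReal.tsum_prod, ← (Equiv.prodComm ℕ ι).tsum_eq] at hp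
    exact (ENNReal.summable_toReal hp).congr fun z =>
      ENNReal.toReal_ofReal (by positivity)
  have hsum_norm : ∀ n, Summable fun i => ‖p i n‖ := fun n =>
    (summable_mul_right_iff (pow_pos (NNReal.coe_pos.2 hr) n).ne').1 (hsum.prod_factor n)
  refine ⟨?_, by exact_mod_cast hr, fun {y} hy => ?_⟩
  · refine FormalMultilinearSeries.le_radius_of_summable_norm _ <|
      hsum.prod.of_nonneg_of_le (fun n => by positivity) fun n => ?_
    change _ ≤ ∑' i, ‖p i n‖ * (r : ℝ) ^ n
    rw [tsum_mul_right]
    gcongr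
    exact norm_tsum_le_tsum_norm (hsum_norm n)
  · have hy' : ‖y‖ ≤ r := (enorm_lt_coe.1 (mem_eball_zero_iff.1 hy)).le
    have hsum_eval : Summable fun z : ℕ × ι => p z.2 z.1 fun _ => y := by
      refine hsum.of_norm_bounded fun z => ((p z.2 z.1).le_opNorm _).trans ?_
      rw [prod_const, card_univ, Fintype.card_fin]
      gcongr
    have hfiber := hsum_eval.hasSum.prod_fiberwise fun n =>
      ContinuousMultilinearMap.hasSum_eval (hsum_norm n).of_norm.hasSum fun _ => y
    have hfiber' := ((Equiv.prodComm ι ℕ).hasSum_iff.2 hsum_eval.hasSum).prod_fiberwise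
      fun i => hf i y
    rwa [← hfiber'.tsum_eq] at hfiber

/-- The Taylor series at `0` of `c α ^ k exp β`, for continuous linear forms `α` and `β`. The term
of degree `n` is `c / (n - k)!` times the product of `k` factors `α` and `n - k` factors `β`. -/
noncomputable def powMulExpSeries (c : ℂ) (α β : E →L[ℝ] ℂ) (k : ℕ) :
    ∀ n, E [×n]→L[ℝ] ℂ := fun n =>
  if k ≤ n then
    (c / (n - k).factorial) • (ContinuousMultilinearMap.mkPiAlgebra ℝ (Fin n) ℂ)
      |>.compContinuousLinearMap fun i => if (i : ℕ) < k then α else β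
  else 0

lemma powMulExpSeries_eq_zero (c : ℂ) (α β : E →L[ℝ] ℂ) {k n : ℕ} (h : n ∉ Set.range (k + ·)) :
    powMulExpSeries c α β k n = 0 :=
  if_neg fun hkn => h ⟨n - k, Nat.add_sub_cancel' hkn⟩

lemma prod_fin_add_ite_lt {M : Type*} [CommMonoid M] (k j : ℕ) (a b : M) :
    ∏ i : Fin (k + j), (if (i : ℕ) < k then a else b) = a ^ k * b ^ j := by
  simp [Fin.prod_univ_add]

lemma hasSum_powMulExpSeries (c : ℂ) (α β : E →L[ℝ] ℂ) (k : ℕ) (y : E) :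
    HasSum (fun n => powMulExpSeries c α β k n fun _ => y) (c * α y ^ k * Complex.exp (β y)) := by
  rw [← (add_right_injective k).hasSum_iff fun n hn => by
    rw [powMulExpSeries_eq_zero c α β hn, zero_apply]]
  have hexp := (NormedSpace.expSeries_div_hasSum_exp (β y)).mul_left (c * α y ^ k)
  rw [← Complex.exp_eq_exp_ℂ] at hexp
  refine hexp.congr_fun fun j => ?_
  simp only [Function.comp_apply, powMulExpSeries, le_add_iff_nonneg_right, zero_le, if_true,
    ContinuousMultilinearMap.compContinuousLinearMap_apply, smul_apply,
    ContinuousMultilinearMap.mkPiAlgebra_apply, Nat.add_sub_cancel_left,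
    apply_ite (fun f : E →L[ℝ] ℂ => f y), prod_fin_add_ite_lt, smul_eq_mul]
  ring

lemma norm_powMulExpSeries_add_le (c : ℂ) (α β : E →L[ℝ] ℂ) (k j : ℕ) :
    ‖powMulExpSeries c α β k (k + j)‖ ≤ ‖c‖ * ‖α‖ ^ k * (‖β‖ ^ j / j.factorial) := by
  rw [powMulExpSeries, if_pos (Nat.le_add_right k j), Nat.add_sub_cancel_left]
  refine ContinuousMultilinearMap.opNorm_le_bound (by positivity) fun v => ?_
  have hprod : ∏ i : Fin (k + j), ‖(if (i : ℕ) < k then α else β) (v i)‖ ≤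
      ‖α‖ ^ k * ‖β‖ ^ j * ∏ i, ‖v i‖ := by
    rw [← prod_fin_add_ite_lt, ← prod_mul_distrib]
    refine prod_le_prod (fun _ _ => norm_nonneg _) fun i _ => ?_
    split_ifs <;> exact ContinuousLinearMap.le_opNorm _ _
  rw [ContinuousMultilinearMap.compContinuousLinearMap_apply, smul_apply,
    ContinuousMultilinearMap.mkPiAlgebra_apply, norm_smul, norm_prod, norm_div,
    Complex.norm_natCast]
  calc ‖c‖ / j.factorial * ∏ i : Fin (k + j), ‖(if (i : ℕ) < k then α else β) (v i)‖
      ≤ ‖c‖ / j.factorial * (‖α‖ ^ k * ‖β‖ ^ j * ∏ i, ‖v i‖) := by gcongr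
    _ = ‖c‖ * ‖α‖ ^ k * (‖β‖ ^ j / j.factorial) * ∏ i, ‖v i‖ := by ring

lemma tsum_ofReal_norm_powMulExpSeries_le (c : ℂ) (α β : E →L[ℝ] ℂ) (k : ℕ) (r : ℝ≥0) :
    ∑' n, ENNReal.ofReal (‖powMulExpSeries c α β k n‖ * r ^ n) ≤
      .ofReal (‖c‖ * (‖α‖ * r) ^ k * Real.exp (‖β‖ * r)) := by
  have hexp := NormedSpace.expSeries_div_hasSum_exp (‖β‖ * r)
  rw [← Real.exp_eq_exp_ℝ] at hexp
  rw [← (add_right_injective k).tsum_eq (Function.support_subset_iff'.2 fun n hn => by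
    rw [powMulExpSeries_eq_zero c α β hn, norm_zero, zero_mul, ENNReal.ofReal_zero]),
    ← hexp.tsum_eq, ← tsum_mul_left, ENNReal.ofReal_tsum_of_nonneg (fun j => by positivity)
      (hexp.summable.mul_left _)]
  refine ENNReal.tsum_le_tsum fun j => ENNReal.ofReal_le_ofReal ?_
  calc ‖powMulExpSeries c α β k (k + j)‖ * (r : ℝ) ^ (k + j)
      ≤ ‖c‖ * ‖α‖ ^ k * (‖β‖ ^ j / j.factorial) * (r : ℝ) ^ (k + j) := by
        gcongr; exact norm_powMulExpSeries_add_le c α β k j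
    _ = ‖c‖ * (‖α‖ * r) ^ k * ((‖β‖ * r) ^ j / j.factorial) := by ring

end PowerSeries

/-! ### Cauchy estimates for real-analytic functions -/

section CauchyEstimates

variable {𝕜 E F : Type*} [NontriviallyNormedField 𝕜] [NormedAddCommGroup E] [NormedSpace 𝕜 E]
  [NormedAddCommGroup F] [NormedSpace 𝕜 F]

lemma exists_nnnorm_changeOrigin_mul_pow_le (p : FormalMultilinearSeries 𝕜 E F) {ρ : ℝ≥0}
    (hρ : (ρ + ρ : ℝ≥0∞) < p.radius) :
    ∃ C : ℝ≥0, ∀ y : E, ‖y‖₊ ≤ ρ → ∀ n, ‖p.changeOrigin y n‖₊ * ρ ^ n ≤ C := by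
  have hsum := p.changeOriginSeries_summable_aux₁ hρ
  obtain ⟨hfib, htot⟩ := NNReal.summable_sigma.1 hsum
  refine ⟨_, fun y hy n => le_trans ?_ (htot.le_tsum n fun _ _ => zero_le)⟩
  have hy_rad : (‖y‖₊ : ℝ≥0∞) < p.radius :=
    lt_of_le_of_lt (le_add_right (ENNReal.coe_le_coe.2 hy)) hρ
  have hle (s : Σ l : ℕ, {s : Finset (Fin (n + l)) // #s = l}) :
      ‖p (n + s.1)‖₊ * ‖y‖₊ ^ s.1 * ρ ^ n ≤ ‖p (n + s.1)‖₊ * ρ ^ s.1 * ρ ^ n := by gcongr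
  calc ‖p.changeOrigin y n‖₊ * ρ ^ n
      ≤ (∑' s : Σ l : ℕ, {s : Finset (Fin (n + l)) // #s = l},
          ‖p (n + s.1)‖₊ * ‖y‖₊ ^ s.1) * ρ ^ n := by gcongr; exact p.nnnorm_changeOrigin_le n hy_rad
    _ ≤ _ := by
      rw [← NNReal.tsum_mul_right]
      exact (NNReal.summable_of_le hle (hfib n)).tsum_le_tsum hle (hfib n)

/-- On `K`, the Taylor coefficients of `f` are bounded by those of a geometric series of
radius `ρ`. -/
def CauchyEstimateOn (𝕜 : Type*) [NontriviallyNormedField 𝕜] [NormedSpace 𝕜 E] [NormedSpace 𝕜 F]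
    (f : E → F) (K : Set E) (C ρ : ℝ) : Prop :=
  ∀ x ∈ K, ∀ (n : ℕ) (w : E), ‖iteratedFDeriv 𝕜 n f x fun _ => w‖ ≤ C * n.factorial * (‖w‖ / ρ) ^ n

variable {f : E → F}

lemma CauchyEstimateOn.mono {K K' : Set E} {C C' ρ ρ' : ℝ} (h : CauchyEstimateOn 𝕜 f K C ρ)
    (hK : K' ⊆ K) (hC : C ≤ C') (hC' : 0 ≤ C') (hρ' : 0 < ρ') (hρ : ρ' ≤ ρ) :
    CauchyEstimateOn 𝕜 f K' C' ρ' := fun x hx n w =>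
  (h x (hK hx) n w).trans <| by
    have : 0 ≤ ‖w‖ / ρ := div_nonneg (norm_nonneg w) (hρ'.le.trans hρ)
    gcongr

variable [CompleteSpace F]

lemma exists_cauchyEstimateOn_ball {x₀ : E} (hf : AnalyticAt 𝕜 f x₀) :
    ∃ C ρ : ℝ, 0 ≤ C ∧ 0 < ρ ∧ CauchyEstimateOn 𝕜 f (Metric.ball x₀ ρ) C ρ := by
  obtain ⟨p, r, hp⟩ := hf
  obtain ⟨R, hR, hRr⟩ := ENNReal.lt_iff_exists_nnreal_btwn.1 hp.r_pos
  have hhalf : ((R / 2 : ℝ≥0) + (R / 2 : ℝ≥0) : ℝ≥0∞) = R := by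
    rw [← ENNReal.coe_add, add_halves]
  set ρ := R / 2
  have hρ : 0 < ρ := half_pos (ENNReal.coe_pos.1 hR)
  obtain ⟨C, hC⟩ := exists_nnnorm_changeOrigin_mul_pow_le p (hhalf ▸ hRr.trans_le hp.r_le)
  refine ⟨C, ρ, C.coe_nonneg, hρ, fun x hx n w => ?_⟩
  obtain ⟨y, rfl⟩ : ∃ y, x = x₀ + y := ⟨x - x₀, by abel⟩
  have hy : ‖y‖₊ < ρ := by
    rw [mem_ball_iff_norm, add_sub_cancel_left] at hx
    exact_mod_cast hx
  have hyr : ‖y‖ₑ < r :=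
    (ENNReal.coe_lt_coe.2 hy).trans_le ((le_self_add.trans hhalf.le).trans hRr.le)
  have hbound : ‖p.changeOrigin y n‖ * (ρ : ℝ) ^ n ≤ C := by exact_mod_cast hC y hy.le n
  rw [← (hp.changeOrigin hyr).factorial_smul w n]
  calc ‖n.factorial • p.changeOrigin y n fun _ => w‖
      ≤ n.factorial * ‖p.changeOrigin y n fun _ => w‖ := norm_nsmul_le
    _ ≤ n.factorial * (‖p.changeOrigin y n‖ * ‖w‖ ^ n) := by
        gcongr
        simpa using (p.changeOrigin y n).le_opNorm fun _ => w
    _ = ‖p.changeOrigin y n‖ * (ρ : ℝ) ^ n * n.factorial * (‖w‖ / ρ) ^ n := by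
        have : (ρ : ℝ) ≠ 0 := by exact_mod_cast hρ.ne'
        rw [div_pow]
        field_simp
    _ ≤ C * n.factorial * (‖w‖ / ρ) ^ n := by gcongr

lemma exists_cauchyEstimateOn_of_isCompact (hf : ∀ x, AnalyticAt 𝕜 f x) {K : Set E}
    (hK : IsCompact K) : ∃ C ρ : ℝ, 0 ≤ C ∧ 0 < ρ ∧ CauchyEstimateOn 𝕜 f K C ρ := by
  refine hK.induction_on ?_ ?_ ?_ ?_
  · exact ⟨0, 1, le_rfl, one_pos, fun _ hx => hx.elim⟩
  · rintro s t hst ⟨C, ρ, hC, hρ, h⟩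
    exact ⟨C, ρ, hC, hρ, h.mono hst le_rfl hC hρ le_rfl⟩
  · rintro s t ⟨C, ρ, hC, hρ, h⟩ ⟨C', ρ', -, hρ', h'⟩
    have hmax : 0 ≤ max C C' := hC.trans (le_max_left _ _)
    have hmin : 0 < min ρ ρ' := lt_min hρ hρ'
    refine ⟨max C C', min ρ ρ', hmax, hmin, fun x hx => hx.elim (fun hx => ?_) fun hx => ?_⟩
    · exact h.mono subset_rfl (le_max_left _ _) hmax hmin (min_le_left _ _) x hx
    · exact h'.mono subset_rfl (le_max_right _ _) hmax hmin (min_le_right _ _) x hx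
  · intro x _
    obtain ⟨C, ρ, hC, hρ, h⟩ := exists_cauchyEstimateOn_ball (hf x)
    exact ⟨_, mem_nhdsWithin_of_mem_nhds (Metric.ball_mem_nhds x hρ), C, ρ, hC, hρ, h⟩

end CauchyEstimates

/-- The space `ℝ^m` with its Euclidean norm. -/
abbrev Space (m : ℕ) : Type := EuclideanSpace ℝ (Fin m)

/-- The frequencies `ξ ∈ ℤ^m` of Fourier series on `ℝ^m / ℤ^m`. -/
abbrev Freq (m : ℕ) : Type := Fin m → ℤ

/-- Families of Fourier coefficients. The pointwise product of `Coeff m` is the action of Fourier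
multipliers; the coefficients of a product of functions are given by `conv`. -/
abbrev Coeff (m : ℕ) : Type := Freq m → ℂ

variable {m : ℕ}

/-! ### Weighted `ℓ¹` norms of Fourier coefficients -/

/-- The `ℓ¹` size `|ξ₁| + ⋯ + |ξₘ|` of a frequency. -/
noncomputable def freqSize (ξ : Freq m) : ℝ := ∑ j, |(ξ j : ℝ)|

lemma freqSize_nonneg (ξ : Freq m) : 0 ≤ freqSize ξ := sum_nonneg fun _ _ => abs_nonneg _

lemma freqSize_add_le (ξ η : Freq m) : freqSize (ξ + η) ≤ freqSize ξ + freqSize η := by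
  simp only [freqSize, ← sum_add_distrib, Pi.add_apply, Int.cast_add]
  exact sum_le_sum fun j _ => abs_add_le _ _

lemma abs_le_freqSize (ξ : Freq m) (j : Fin m) : |(ξ j : ℝ)| ≤ freqSize ξ :=
  single_le_sum (f := fun j => |(ξ j : ℝ)|) (fun _ _ => abs_nonneg _) (mem_univ j)

/-- The weight `exp (s |ξ|)`, which measures analyticity in a complex strip of width
`s / (2 π)`. -/
noncomputable def expWeight (s : ℝ) (ξ : Freq m) : ℝ≥0∞ := .ofReal (Real.exp (s * freqSize ξ))

lemma expWeight_mono {s s' : ℝ} (h : s ≤ s') (ξ : Freq m) : expWeight s ξ ≤ expWeight s' ξ := by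
  unfold expWeight
  gcongr
  exact freqSize_nonneg ξ

lemma one_le_expWeight {s : ℝ} (hs : 0 ≤ s) (ξ : Freq m) : 1 ≤ expWeight s ξ := by
  rw [expWeight, ENNReal.one_le_ofReal]
  exact Real.one_le_exp (mul_nonneg hs (freqSize_nonneg ξ))

lemma expWeight_add_le {s : ℝ} (hs : 0 ≤ s) (ξ η : Freq m) :
    expWeight s (ξ + η) ≤ expWeight s ξ * expWeight s η := by
  rw [expWeight, expWeight, expWeight, ← ENNReal.ofReal_mul (Real.exp_pos _).le, ← Real.exp_add,
    ← mul_add]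
  gcongr
  exact freqSize_add_le ξ η

/-- The norm `∑ |a ξ| exp (s |ξ|)`, as an extended nonnegative real. -/
noncomputable def coeffNorm (s : ℝ) (a : Coeff m) : ℝ≥0∞ := ∑' ξ, ‖a ξ‖ₑ * expWeight s ξ

lemma coeffNorm_mono {s s' : ℝ} (h : s ≤ s') (a : Coeff m) : coeffNorm s a ≤ coeffNorm s' a :=
  ENNReal.tsum_le_tsum fun ξ => by gcongr; exact expWeight_mono h ξ

lemma coeffNorm_zero (s : ℝ) : coeffNorm s (0 : Coeff m) = 0 := by simp [coeffNorm]

lemma coeffNorm_add_le (s : ℝ) (a b : Coeff m) :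
    coeffNorm s (a + b) ≤ coeffNorm s a + coeffNorm s b := by
  simp only [coeffNorm, ← ENNReal.tsum_add, ← add_mul]
  exact ENNReal.tsum_le_tsum fun ξ => by gcongr; exact enorm_add_le _ _

lemma coeffNorm_sum_le {κ : Type*} (s : ℝ) (I : Finset κ) (f : κ → Coeff m) :
    coeffNorm s (∑ i ∈ I, f i) ≤ ∑ i ∈ I, coeffNorm s (f i) :=
  le_sum_of_subadditive _ (coeffNorm_zero s).le (coeffNorm_add_le s) I f

lemma coeffNorm_smul (s : ℝ) (c : ℂ) (a : Coeff m) :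
    coeffNorm s (c • a) = ‖c‖ₑ * coeffNorm s a := by
  simp only [coeffNorm, ← ENNReal.tsum_mul_left, Pi.smul_apply, smul_eq_mul, enorm_mul, mul_assoc]

lemma coeffNorm_mul_le {s s' C : ℝ} {μ : Coeff m} (hC : 0 ≤ C)
    (h : ∀ ξ, ‖μ ξ‖ * Real.exp (s * freqSize ξ) ≤ C * Real.exp (s' * freqSize ξ)) (a : Coeff m) :
    coeffNorm s (μ * a) ≤ .ofReal C * coeffNorm s' a := by
  rw [coeffNorm, coeffNorm, ← ENNReal.tsum_mul_left]
  refine ENNReal.tsum_le_tsum fun ξ => ?_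
  have hμ : ‖μ ξ‖ₑ * expWeight s ξ ≤ .ofReal C * expWeight s' ξ := by
    rw [expWeight, expWeight, ← ofReal_norm, ← ENNReal.ofReal_mul (norm_nonneg _),
      ← ENNReal.ofReal_mul hC]
    exact ENNReal.ofReal_le_ofReal (h ξ)
  calc ‖(μ * a) ξ‖ₑ * expWeight s ξ = ‖a ξ‖ₑ * (‖μ ξ‖ₑ * expWeight s ξ) := by
        rw [Pi.mul_apply, enorm_mul]; ring
    _ ≤ ‖a ξ‖ₑ * (.ofReal C * expWeight s' ξ) := by gcongr
    _ = .ofReal C * (‖a ξ‖ₑ * expWeight s' ξ) := by ring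

lemma summable_norm_of_coeffNorm_ne_top {s : ℝ} (hs : 0 ≤ s) {a : Coeff m}
    (h : coeffNorm s a ≠ ∞) : Summable fun ξ => ‖a ξ‖ := by
  have hsum : ∑' ξ, ‖a ξ‖ₑ ≠ ∞ := ne_top_of_le_ne_top h <|
    ENNReal.tsum_le_tsum fun ξ => le_mul_of_one_le_right' (one_le_expWeight hs ξ)
  exact (ENNReal.summable_toReal hsum).congr fun ξ => toReal_enorm _

/-- The convolution of Fourier coefficients. -/
noncomputable def conv (a b : Coeff m) : Coeff m := fun ξ => ∑' η, a η * b (ξ - η)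

lemma coeffNorm_conv_le {s : ℝ} (hs : 0 ≤ s) (a b : Coeff m) :
    coeffNorm s (conv a b) ≤ coeffNorm s a * coeffNorm s b := by
  have hw : ∀ ξ η : Freq m, expWeight s ξ ≤ expWeight s η * expWeight s (ξ - η) := fun ξ η => by
    simpa using expWeight_add_le hs η (ξ - η)
  calc ∑' ξ, ‖∑' η, a η * b (ξ - η)‖ₑ * expWeight s ξ
      ≤ ∑' ξ, ∑' η, ‖a η * b (ξ - η)‖ₑ * expWeight s ξ := by
        simp only [ENNReal.tsum_mul_right]
        gcongr
        exact enorm_tsum_le_tsum_enorm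
    _ ≤ ∑' ξ, ∑' η, ‖a η‖ₑ * ‖b (ξ - η)‖ₑ * (expWeight s η * expWeight s (ξ - η)) := by
        simp only [enorm_mul]
        gcongr
        exact hw _ _
    _ = ∑' η, ∑' ξ, (‖a η‖ₑ * expWeight s η) * (‖b (ξ - η)‖ₑ * expWeight s (ξ - η)) := by
        rw [ENNReal.tsum_comm]
        simp only [mul_mul_mul_comm]
    _ = ∑' η, (‖a η‖ₑ * expWeight s η) * coeffNorm s b := by
        refine tsum_congr fun η => ?_
        rw [ENNReal.tsum_mul_left]
        congr 1
        exact (Equiv.subRight η).tsum_eq fun ξ => ‖b ξ‖ₑ * expWeight s ξ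
    _ = coeffNorm s a * coeffNorm s b := ENNReal.tsum_mul_right

/-! ### Fourier multipliers -/

/-- The symbol `2 π i ξⱼ` of `∂ⱼ`. -/
noncomputable def derivSymbol (j : Fin m) : Coeff m := fun ξ => 2 * Real.pi * Complex.I * ξ j

/-- The symbol `(1 + 4 π² |ξ|²)⁻¹` of `(1 - Δ)⁻¹`. -/
noncomputable def helmholtzInvSymbol : Coeff m := fun ξ =>
  (1 + 4 * Real.pi ^ 2 * ∑ j, (ξ j : ℝ) ^ 2 : ℝ)⁻¹

lemma norm_derivSymbol_le (j : Fin m) (ξ : Freq m) :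
    ‖derivSymbol j ξ‖ ≤ 2 * Real.pi * freqSize ξ := by
  simp only [derivSymbol, norm_mul, Complex.norm_I, mul_one, Complex.norm_real,
    Complex.norm_ofNat, Real.norm_of_nonneg Real.pi_pos.le, Complex.norm_intCast]
  gcongr
  exact abs_le_freqSize ξ j

lemma one_le_one_add_four_mul_pi_sq_mul_sum_sq (ξ : Freq m) :
    1 ≤ 1 + 4 * Real.pi ^ 2 * ∑ j, (ξ j : ℝ) ^ 2 :=
  le_add_of_nonneg_right (by positivity)

lemma norm_helmholtzInvSymbol_le (ξ : Freq m) : ‖helmholtzInvSymbol ξ‖ ≤ 1 := by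
  have h := one_le_one_add_four_mul_pi_sq_mul_sum_sq ξ
  rw [helmholtzInvSymbol, norm_inv, Complex.norm_real,
    Real.norm_of_nonneg (zero_le_one.trans h)]
  exact inv_le_one_of_one_le₀ h

lemma laplacian_symbol_mul_helmholtzInvSymbol :
    ∑ j : Fin m, derivSymbol j * (derivSymbol j * helmholtzInvSymbol) -
      (helmholtzInvSymbol : Coeff m) + 1 = 0 := by
  funext ξ
  have hne : ((1 + 4 * Real.pi ^ 2 * ∑ j, (ξ j : ℝ) ^ 2 : ℝ) : ℂ) ≠ 0 :=
    Complex.ofReal_ne_zero.2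
      (zero_lt_one.trans_le (one_le_one_add_four_mul_pi_sq_mul_sum_sq ξ)).ne'
  have hj : ∀ j, derivSymbol j ξ * derivSymbol j ξ = -(4 * Real.pi ^ 2 * (ξ j : ℂ) ^ 2) := by
    intro j
    unfold derivSymbol
    linear_combination 4 * Real.pi ^ 2 * (ξ j : ℂ) ^ 2 * Complex.I_sq
  simp only [Pi.add_apply, Pi.sub_apply, Finset.sum_apply, Pi.mul_apply, Pi.one_apply,
    Pi.zero_apply, ← mul_assoc, hj, helmholtzInvSymbol, ← sum_mul, sum_neg_distrib, ← mul_sum]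
  field_simp
  push_cast
  ring

lemma coeffNorm_derivSymbol_mul_le {s δ : ℝ} (hδ : 0 < δ) (j : Fin m) (a : Coeff m) :
    coeffNorm s (derivSymbol j * a) ≤ .ofReal (2 * Real.pi / δ) * coeffNorm (s + δ) a := by
  refine coeffNorm_mul_le (by positivity) (fun ξ => ?_) a
  have hexp : δ * freqSize ξ ≤ Real.exp (δ * freqSize ξ) :=
    (le_add_of_nonneg_right zero_le_one).trans (Real.add_one_le_exp _)
  calc ‖derivSymbol j ξ‖ * Real.exp (s * freqSize ξ)
      ≤ 2 * Real.pi * freqSize ξ * Real.exp (s * freqSize ξ) := by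
        gcongr; exact norm_derivSymbol_le j ξ
    _ = 2 * Real.pi / δ * (δ * freqSize ξ) * Real.exp (s * freqSize ξ) := by field_simp
    _ ≤ 2 * Real.pi / δ * Real.exp (δ * freqSize ξ) * Real.exp (s * freqSize ξ) := by gcongr
    _ = 2 * Real.pi / δ * Real.exp ((s + δ) * freqSize ξ) := by
        rw [mul_assoc, ← Real.exp_add]; ring_nf

lemma coeffNorm_helmholtzInvSymbol_mul_le (s : ℝ) (a : Coeff m) :
    coeffNorm s (helmholtzInvSymbol * a) ≤ coeffNorm s a := by
  have h := coeffNorm_mul_le (s := s) (s' := s) zero_le_one (fun ξ => by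
    gcongr; exact norm_helmholtzInvSymbol_le ξ) a
  rwa [ENNReal.ofReal_one, one_mul] at h

/-! ### Coefficients of real-valued functions -/

/-- The symmetry `a (-ξ) = conj (a ξ)` of the Fourier coefficients of a real-valued function. -/
def IsHermitianSymm (a : Coeff m) : Prop := ∀ ξ, a (-ξ) = starRingEnd ℂ (a ξ)

namespace IsHermitianSymm

lemma zero : IsHermitianSymm (0 : Coeff m) := fun ξ => by simp

lemma add {a b : Coeff m} (ha : IsHermitianSymm a) (hb : IsHermitianSymm b) :
    IsHermitianSymm (a + b) := fun ξ => by simp [ha ξ, hb ξ]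

lemma mul {a b : Coeff m} (ha : IsHermitianSymm a) (hb : IsHermitianSymm b) :
    IsHermitianSymm (a * b) := fun ξ => by simp [ha ξ, hb ξ]

lemma real_smul {a : Coeff m} (ha : IsHermitianSymm a) (c : ℝ) :
    IsHermitianSymm ((c : ℂ) • a) := fun ξ => by simp [ha ξ]

lemma sum {κ : Type*} {I : Finset κ} {f : κ → Coeff m} (h : ∀ i ∈ I, IsHermitianSymm (f i)) :
    IsHermitianSymm (∑ i ∈ I, f i) :=
  sum_induction _ _ (fun _ _ => add) zero h

protected lemma conv {a b : Coeff m} (ha : IsHermitianSymm a) (hb : IsHermitianSymm b) :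
    IsHermitianSymm (conv a b) := by
  intro ξ
  rw [conv, conv, ← (Equiv.neg (Freq m)).tsum_eq,
    Complex.conj_tsum]
  refine tsum_congr fun η => ?_
  have h : -ξ - -η = -(ξ - η) := by abel
  rw [Equiv.neg_apply, h, hb, ha, map_mul]

end IsHermitianSymm

lemma isHermitianSymm_derivSymbol (j : Fin m) : IsHermitianSymm (derivSymbol j) := fun ξ => by
  simp [derivSymbol, Complex.conj_ofNat]

lemma isHermitianSymm_helmholtzInvSymbol : IsHermitianSymm (helmholtzInvSymbol : Coeff m) :=
  fun ξ => by simp [helmholtzInvSymbol, Complex.conj_ofNat]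

/-! ### Fourier–Taylor coefficients -/

/-- Fourier–Taylor coefficients: `A k ξ` is the coefficient of `t ^ k exp (2 π i ξ · x)`. -/
abbrev TimeSeries (m : ℕ) : Type := ℕ → Coeff m

/-- The action of a Fourier multiplier at each order in time. -/
noncomputable def applySymbol (μ : Coeff m) (A : TimeSeries m) : TimeSeries m := fun k => μ * A k

/-- The coefficients of a product of functions. -/
noncomputable def seriesMul (A B : TimeSeries m) : TimeSeries m := fun k =>
  ∑ p ∈ antidiagonal k, conv (A p.1) (B p.2)

/-- The coefficients of the time derivative. -/
noncomputable def timeDeriv (A : TimeSeries m) : TimeSeries m := fun k =>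
  ((k + 1 : ℝ) : ℂ) • A (k + 1)

/-- The norm `∑ |A k ξ| r ^ k exp (2 π r |ξ|)`. The parameter `r` bounds the radii of convergence in
`t` and in `x` at once, so that both derivatives cost an arbitrarily small loss of `r`. -/
noncomputable def seriesNorm (r : ℝ) (A : TimeSeries m) : ℝ≥0∞ :=
  ∑' k, .ofReal (r ^ k) * coeffNorm (2 * Real.pi * r) (A k)

lemma coeffNorm_ne_top_of_seriesNorm_ne_top {r : ℝ} (hr : 0 < r) {A : TimeSeries m}
    (h : seriesNorm r A ≠ ∞) (k : ℕ) : coeffNorm (2 * Real.pi * r) (A k) ≠ ∞ := fun hk =>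
  ENNReal.ne_top_of_tsum_ne_top h k <| by
    rw [hk, ENNReal.mul_top (ENNReal.ofReal_pos.2 (pow_pos hr k)).ne']

lemma seriesNorm_zero (r : ℝ) : seriesNorm r (0 : TimeSeries m) = 0 := by
  simp [seriesNorm, coeffNorm_zero]

lemma seriesNorm_add_le (r : ℝ) (A B : TimeSeries m) :
    seriesNorm r (A + B) ≤ seriesNorm r A + seriesNorm r B := by
  simp only [seriesNorm, ← ENNReal.tsum_add, ← mul_add]
  gcongr
  exact coeffNorm_add_le _ _ _

lemma seriesNorm_smul (r : ℝ) (c : ℂ) (A : TimeSeries m) :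
    seriesNorm r (c • A) = ‖c‖ₑ * seriesNorm r A := by
  simp only [seriesNorm, ← ENNReal.tsum_mul_left, Pi.smul_apply, coeffNorm_smul, mul_left_comm]

lemma seriesNorm_applySymbol_le {r r' : ℝ} {μ : Coeff m} {C : ℝ≥0∞} (hr : 0 ≤ r) (h : r ≤ r')
    (hμ : ∀ a, coeffNorm (2 * Real.pi * r) (μ * a) ≤ C * coeffNorm (2 * Real.pi * r') a)
    (A : TimeSeries m) : seriesNorm r (applySymbol μ A) ≤ C * seriesNorm r' A := by
  rw [seriesNorm, seriesNorm, ← ENNReal.tsum_mul_left]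
  refine ENNReal.tsum_le_tsum fun k => ?_
  rw [mul_left_comm C]
  gcongr
  exact hμ (A k)

lemma seriesNorm_derivSymbol_le {r r' : ℝ} (hr : 0 ≤ r) (h : r < r') (j : Fin m)
    (A : TimeSeries m) :
    seriesNorm r (applySymbol (derivSymbol j) A) ≤ .ofReal (r' - r)⁻¹ * seriesNorm r' A := by
  refine seriesNorm_applySymbol_le hr h.le (fun a => ?_) A
  have hδ : 0 < 2 * Real.pi * (r' - r) := by have := sub_pos.2 h; positivity
  convert coeffNorm_derivSymbol_mul_le hδ j a using 3
  · field_simp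
  · ring

lemma seriesNorm_helmholtzInvSymbol_le {r : ℝ} (hr : 0 ≤ r) (A : TimeSeries m) :
    seriesNorm r (applySymbol helmholtzInvSymbol A) ≤ seriesNorm r A := by
  simpa only [one_mul] using seriesNorm_applySymbol_le (C := 1) hr le_rfl
    (fun a => by simpa only [one_mul] using coeffNorm_helmholtzInvSymbol_mul_le _ a) A

lemma natCast_mul_pow_le {r r' : ℝ} (hr : 0 ≤ r) (h : r < r') (k : ℕ) :
    k * r ^ (k - 1) ≤ (r' - r)⁻¹ * r' ^ k := by
  rw [inv_mul_eq_div, le_div_iff₀' (sub_pos.2 h)]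
  have hgeom : k * r ^ (k - 1) ≤ ∑ i ∈ range k, r' ^ i * r ^ (k - 1 - i) := by
    nth_rw 1 [← card_range k]
    rw [← nsmul_eq_mul]
    refine card_nsmul_le_sum _ _ _ fun i hi => ?_
    rw [← pow_mul_pow_sub r (Nat.le_sub_one_of_lt (mem_range.1 hi))]
    gcongr
  calc (r' - r) * (k * r ^ (k - 1)) ≤ (r' - r) * ∑ i ∈ range k, r' ^ i * r ^ (k - 1 - i) := by
        have := sub_pos.2 h
        gcongr
    _ = r' ^ k - r ^ k := by rw [mul_comm, geom_sum₂_mul]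
    _ ≤ r' ^ k := sub_le_self _ (by positivity)

lemma seriesNorm_seriesMul_le {r : ℝ} (hr : 0 ≤ r) (A B : TimeSeries m) :
    seriesNorm r (seriesMul A B) ≤ seriesNorm r A * seriesNorm r B := by
  set f : ℕ → ℝ≥0∞ := fun k => .ofReal (r ^ k) * coeffNorm (2 * Real.pi * r) (A k)
  set g : ℕ → ℝ≥0∞ := fun k => .ofReal (r ^ k) * coeffNorm (2 * Real.pi * r) (B k)
  have hconv : ∀ p : ℕ × ℕ, ENNReal.ofReal (r ^ (p.1 + p.2)) *
      coeffNorm (2 * Real.pi * r) (conv (A p.1) (B p.2)) ≤ f p.1 * g p.2 := fun p => by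
    calc _ ≤ ENNReal.ofReal (r ^ (p.1 + p.2)) *
          (coeffNorm (2 * Real.pi * r) (A p.1) * coeffNorm (2 * Real.pi * r) (B p.2)) := by
          gcongr
          exact coeffNorm_conv_le (by positivity) _ _
      _ = f p.1 * g p.2 := by
          rw [pow_add, ENNReal.ofReal_mul (by positivity)]
          ring
  calc seriesNorm r (seriesMul A B) ≤ ∑' k, ∑ p ∈ antidiagonal k, f p.1 * g p.2 := by
        refine ENNReal.tsum_le_tsum fun k => ?_
        grw [seriesMul, coeffNorm_sum_le, mul_sum]
        refine sum_le_sum fun p hp => ?_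
        rw [← mem_antidiagonal.1 hp]
        exact hconv p
    _ = ∑' z : ℕ × ℕ, f z.1 * g z.2 := by
        rw [← HasAntidiagonal.sigmaAntidiagonalEquivProd.tsum_eq, ENNReal.tsum_sigma']
        refine tsum_congr fun k => ?_
        rw [tsum_fintype]
        exact (sum_coe_sort (antidiagonal k) fun p : ℕ × ℕ => f p.1 * g p.2).symm
    _ = seriesNorm r A * seriesNorm r B := by
        rw [ENNReal.tsum_prod']
        simp_rw [ENNReal.tsum_mul_left, ENNReal.tsum_mul_right]
        rfl

/-- The Fourier–Taylor coefficients of a real-valued function that is analytic on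
`(-ε, ε) × ℝ^m`. -/
structure IsAnalyticSeries (ε : ℝ) (A : TimeSeries m) : Prop where
  seriesNorm_ne_top : ∀ r, 0 ≤ r → r < ε → seriesNorm r A ≠ ∞
  isHermitianSymm : ∀ k, IsHermitianSymm (A k)

namespace IsAnalyticSeries

variable {ε : ℝ} {A B : TimeSeries m}

lemma zero : IsAnalyticSeries ε (0 : TimeSeries m) where
  seriesNorm_ne_top r _ _ := by simp [seriesNorm_zero]
  isHermitianSymm _ := IsHermitianSymm.zero

lemma add (hA : IsAnalyticSeries ε A) (hB : IsAnalyticSeries ε B) : IsAnalyticSeries ε (A + B) where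
  seriesNorm_ne_top r h0 hr := ne_top_of_le_ne_top
    (ENNReal.add_ne_top.2 ⟨hA.seriesNorm_ne_top r h0 hr, hB.seriesNorm_ne_top r h0 hr⟩)
    (seriesNorm_add_le r A B)
  isHermitianSymm k := (hA.isHermitianSymm k).add (hB.isHermitianSymm k)

lemma sum {κ : Type*} {I : Finset κ} {f : κ → TimeSeries m}
    (h : ∀ i ∈ I, IsAnalyticSeries ε (f i)) : IsAnalyticSeries ε (∑ i ∈ I, f i) :=
  sum_induction _ _ (fun _ _ => add) zero h

lemma neg (hA : IsAnalyticSeries ε A) : IsAnalyticSeries ε (-A) where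
  seriesNorm_ne_top r h0 hr := by
    rw [← neg_one_smul ℂ A, seriesNorm_smul]
    exact ENNReal.mul_ne_top enorm_ne_top (hA.seriesNorm_ne_top r h0 hr)
  isHermitianSymm k := by simpa using (hA.isHermitianSymm k).real_smul (-1)

protected lemma seriesMul (hA : IsAnalyticSeries ε A) (hB : IsAnalyticSeries ε B) :
    IsAnalyticSeries ε (seriesMul A B) where
  seriesNorm_ne_top r h0 hr := ne_top_of_le_ne_top
    (ENNReal.mul_ne_top (hA.seriesNorm_ne_top r h0 hr) (hB.seriesNorm_ne_top r h0 hr))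
    (seriesNorm_seriesMul_le h0 A B)
  isHermitianSymm _ := .sum fun _ _ => (hA.isHermitianSymm _).conv (hB.isHermitianSymm _)

protected lemma derivSymbol (hA : IsAnalyticSeries ε A) (j : Fin m) :
    IsAnalyticSeries ε (applySymbol (derivSymbol j) A) where
  seriesNorm_ne_top r h0 hr := by
    obtain ⟨r', hrr', hr'⟩ := exists_between hr
    exact ne_top_of_le_ne_top (ENNReal.mul_ne_top ENNReal.ofReal_ne_top
      (hA.seriesNorm_ne_top r' (h0.trans hrr'.le) hr')) (seriesNorm_derivSymbol_le h0 hrr' j A)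
  isHermitianSymm k := (isHermitianSymm_derivSymbol j).mul (hA.isHermitianSymm k)

protected lemma helmholtzInvSymbol (hA : IsAnalyticSeries ε A) :
    IsAnalyticSeries ε (applySymbol helmholtzInvSymbol A) where
  seriesNorm_ne_top r h0 hr := ne_top_of_le_ne_top (hA.seriesNorm_ne_top r h0 hr)
    (seriesNorm_helmholtzInvSymbol_le h0 A)
  isHermitianSymm k := isHermitianSymm_helmholtzInvSymbol.mul (hA.isHermitianSymm k)

end IsAnalyticSeries

/-! ### Evaluation of Fourier–Taylor series -/

/-- The linear form `x ↦ 2 π i ξ · x`. -/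
noncomputable def phase (ξ : Freq m) : Space m →L[ℝ] ℂ :=
  ∑ j, derivSymbol j ξ • Complex.ofRealCLM ∘L EuclideanSpace.proj j

lemma phase_apply (ξ : Freq m) (x : Space m) :
    phase ξ x = ((2 * Real.pi * ∑ j, ξ j * x j : ℝ) : ℂ) * Complex.I := by
  simp only [phase, derivSymbol, _root_.sum_apply, smul_apply, ContinuousLinearMap.comp_apply,
    PiLp.proj_apply, Complex.ofRealCLM_apply, smul_eq_mul]
  push_cast
  rw [mul_sum, sum_mul]
  exact sum_congr rfl fun j _ => by ring

lemma phase_single (ξ : Freq m) (j : Fin m) :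
    phase ξ (EuclideanSpace.single j 1) = derivSymbol j ξ := by
  simp only [phase, derivSymbol, _root_.sum_apply, smul_apply, ContinuousLinearMap.comp_apply,
    PiLp.proj_apply, PiLp.single_apply, Complex.ofRealCLM_apply, smul_eq_mul]
  exact (sum_eq_single_of_mem j (mem_univ j) fun i _ hij => by simp [hij]).trans (by simp)

lemma norm_phase_le (ξ : Freq m) : ‖phase ξ‖ ≤ 2 * Real.pi * freqSize ξ := by
  have hξ := freqSize_nonneg ξ
  refine ContinuousLinearMap.opNorm_le_bound _ (by positivity) fun x => ?_
  rw [phase_apply, norm_mul, Complex.norm_I, mul_one, Complex.norm_real, norm_mul,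
    Real.norm_of_nonneg (by positivity), mul_assoc _ (freqSize ξ), freqSize, sum_mul]
  gcongr
  refine (norm_sum_le _ _).trans (sum_le_sum fun j _ => ?_)
  rw [norm_mul, Real.norm_eq_abs]
  gcongr
  exact PiLp.norm_apply_le x j

/-- The character `x ↦ exp (2 π i ξ · x)`. -/
noncomputable def character (ξ : Freq m) (x : Space m) : ℂ := Complex.exp (phase ξ x)

lemma norm_character (ξ : Freq m) (x : Space m) : ‖character ξ x‖ = 1 := by
  rw [character, phase_apply, Complex.norm_exp_ofReal_mul_I]

lemma character_add_left (ξ η : Freq m) (x : Space m) :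
    character (ξ + η) x = character ξ x * character η x := by
  simp only [character, ← Complex.exp_add, phase_apply, Pi.add_apply, Int.cast_add, add_mul,
    sum_add_distrib, mul_add, Complex.ofReal_add]

lemma character_add_right (ξ : Freq m) (x y : Space m) :
    character ξ (x + y) = character ξ x * character ξ y := by
  rw [character, map_add, Complex.exp_add, character, character]

lemma character_neg (ξ : Freq m) (x : Space m) :
    character (-ξ) x = starRingEnd ℂ (character ξ x) := by
  simp only [character, ← Complex.exp_conj, phase_apply, map_mul, Complex.conj_ofReal,
    Complex.conj_I, Pi.neg_apply, Int.cast_neg, neg_mul, sum_neg_distrib, mul_neg,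
    Complex.ofReal_neg]

/-- The inclusion of the period lattice `ℤ^m` into `ℝ^m`. -/
abbrev lattice (z : Fin m → ℤ) : Space m := (WithLp.equiv 2 (Fin m → ℝ)).symm fun i => (z i : ℝ)

lemma character_lattice (ξ z : Freq m) : character ξ (lattice z) = 1 := by
  rw [character, phase_apply, Complex.exp_eq_one_iff]
  have hz (j) : lattice z j = z j := rfl
  refine ⟨∑ j, ξ j * z j, ?_⟩
  simp only [hz]
  push_cast
  ring

/-- The function on `ℝ^m` with Fourier coefficients `a`. -/
noncomputable def fourierEval (a : Coeff m) (x : Space m) : ℂ := ∑' ξ, a ξ * character ξ x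

/-- The complex-valued function on spacetime with Fourier–Taylor coefficients `A`. -/
noncomputable def seriesEval (A : TimeSeries m) (p : ℝ × Space m) : ℂ :=
  ∑' q : ℕ × Freq m, A q.1 q.2 * ((p.1 : ℂ) ^ q.1 * character q.2 p.2)

lemma seriesEval_zero_time (A : TimeSeries m) (x : Space m) :
    seriesEval A (0, x) = fourierEval (A 0) x := by
  rw [seriesEval, ← (Prod.mk_right_injective 0).tsum_eq]
  · simp [fourierEval]
  · refine Function.support_subset_iff'.2 fun ⟨k, ξ⟩ h => ?_
    have hk : k ≠ 0 := fun hk => h ⟨ξ, by rw [hk]⟩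
    simp [hk]

lemma seriesEval_add_lattice (A : TimeSeries m) (t : ℝ) (x : Space m) (z : Fin m → ℤ) :
    seriesEval A (t, x + lattice z) = seriesEval A (t, x) := by
  simp only [seriesEval, character_add_right, character_lattice, mul_one]

lemma ofReal_re_seriesEval {A : TimeSeries m} (hA : ∀ k, IsHermitianSymm (A k))
    (p : ℝ × Space m) : ((seriesEval A p).re : ℂ) = seriesEval A p := by
  rw [← Complex.conj_eq_iff_re, seriesEval, Complex.conj_tsum,
    ← ((Equiv.refl ℕ).prodCongr (Equiv.neg (Freq m))).tsum_eq]
  refine tsum_congr fun q => ?_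
  simp [hA q.1 q.2, character_neg]

lemma tsum_ofReal_weighted_eq_seriesNorm {r : ℝ} (hr : 0 ≤ r) (A : TimeSeries m) :
    ∑' q : ℕ × Freq m, ENNReal.ofReal
      (‖A q.1 q.2‖ * r ^ q.1 * Real.exp (2 * Real.pi * r * freqSize q.2)) = seriesNorm r A := by
  rw [ENNReal.tsum_prod']
  refine tsum_congr fun k => ?_
  rw [coeffNorm, ← ENNReal.tsum_mul_left]
  refine tsum_congr fun ξ => ?_
  rw [expWeight, mul_comm ‖A k ξ‖, ENNReal.ofReal_mul (by positivity),
    ENNReal.ofReal_mul (by positivity), ofReal_norm, mul_assoc]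

lemma summable_weighted {r : ℝ} (hr : 0 ≤ r) {A : TimeSeries m} (h : seriesNorm r A ≠ ∞) :
    Summable fun q : ℕ × Freq m =>
      ‖A q.1 q.2‖ * r ^ q.1 * Real.exp (2 * Real.pi * r * freqSize q.2) := by
  rw [← tsum_ofReal_weighted_eq_seriesNorm hr] at h
  exact (ENNReal.summable_toReal h).congr fun q => ENNReal.toReal_ofReal (by positivity)

section Algebra

variable {r : ℝ} {A B : TimeSeries m} {p : ℝ × Space m}

lemma summable_norm_seriesEval (hA : seriesNorm r A ≠ ∞) (hp : |p.1| ≤ r) :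
    Summable fun q : ℕ × Freq m => ‖A q.1 q.2 * ((p.1 : ℂ) ^ q.1 * character q.2 p.2)‖ := by
  have hr : 0 ≤ r := (abs_nonneg _).trans hp
  refine (summable_weighted hr hA).of_nonneg_of_le (fun _ => norm_nonneg _) fun q => ?_
  rw [norm_mul, norm_mul, norm_character, norm_pow, Complex.norm_real, Real.norm_eq_abs, mul_one]
  have hξ := freqSize_nonneg q.2
  refine le_trans ?_ (le_mul_of_one_le_right (by positivity) (Real.one_le_exp (by positivity)))
  gcongr

lemma seriesEval_add (hA : seriesNorm r A ≠ ∞) (hB : seriesNorm r B ≠ ∞) (hp : |p.1| ≤ r) :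
    seriesEval (A + B) p = seriesEval A p + seriesEval B p := by
  simp only [seriesEval, Pi.add_apply, add_mul]
  exact (summable_norm_seriesEval hA hp).of_norm.tsum_add (summable_norm_seriesEval hB hp).of_norm

lemma seriesEval_neg (A : TimeSeries m) (p : ℝ × Space m) :
    seriesEval (-A) p = -seriesEval A p := by
  simp only [seriesEval, Pi.neg_apply, neg_mul, tsum_neg]

lemma summable_norm_mul_character {a : Coeff m} (h : Summable fun ξ => ‖a ξ‖) (x : Space m) :
    Summable fun ξ => ‖a ξ * character ξ x‖ := by
  simpa only [norm_mul, norm_character, mul_one] using h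

lemma fourierEval_conv {a b : Coeff m} (ha : Summable fun ξ => ‖a ξ‖)
    (hb : Summable fun ξ => ‖b ξ‖) (x : Space m) :
    fourierEval (conv a b) x = fourierEval a x * fourierEval b x := by
  let e : Freq m × Freq m ≃ Freq m × Freq m :=
    { toFun := fun z => (z.2, z.1 - z.2)
      invFun := fun z => (z.1 + z.2, z.1)
      left_inv := fun z => by simp
      right_inv := fun z => by simp }
  have hsum : Summable fun z => a (e z).1 * character (e z).1 x *
      (b (e z).2 * character (e z).2 x) :=
    e.summable_iff.2 <| summable_mul_of_summable_norm
      (summable_norm_mul_character ha x) (summable_norm_mul_character hb x)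
  rw [fourierEval, fourierEval, fourierEval, tsum_mul_tsum_of_summable_norm
    (summable_norm_mul_character ha x) (summable_norm_mul_character hb x), ← e.tsum_eq,
    hsum.tsum_prod]
  refine tsum_congr fun ξ => ?_
  rw [conv, ← tsum_mul_right]
  refine tsum_congr fun η => ?_
  have hξ : character ξ x = character η x * character (ξ - η) x := by
    rw [← character_add_left, add_sub_cancel]
  simp only [e, Equiv.coe_fn_mk, hξ]
  ring

lemma fourierEval_sum {κ : Type*} {I : Finset κ} {f : κ → Coeff m}
    (h : ∀ i ∈ I, Summable fun ξ => ‖f i ξ‖) (x : Space m) :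
    fourierEval (∑ i ∈ I, f i) x = ∑ i ∈ I, fourierEval (f i) x := by
  simp only [fourierEval, Finset.sum_apply, sum_mul]
  exact Summable.tsum_finsetSum fun i hi => (summable_norm_mul_character (h i hi) x).of_norm

lemma summable_norm_coeff (hr : 0 < r) (hA : seriesNorm r A ≠ ∞) (k : ℕ) :
    Summable fun ξ => ‖A k ξ‖ :=
  summable_norm_of_coeffNorm_ne_top (by positivity) (coeffNorm_ne_top_of_seriesNorm_ne_top hr hA k)

lemma tsum_mul_character_eq (A : TimeSeries m) (p : ℝ × Space m) (k : ℕ) :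
    ∑' ξ, A k ξ * ((p.1 : ℂ) ^ k * character ξ p.2) = (p.1 : ℂ) ^ k * fourierEval (A k) p.2 := by
  rw [fourierEval, ← tsum_mul_left]
  exact tsum_congr fun ξ => by ring

lemma seriesEval_eq_tsum_fourierEval (hA : seriesNorm r A ≠ ∞) (hp : |p.1| ≤ r) :
    seriesEval A p = ∑' k, (p.1 : ℂ) ^ k * fourierEval (A k) p.2 := by
  rw [seriesEval, (summable_norm_seriesEval hA hp).of_norm.tsum_prod]
  exact tsum_congr fun k => tsum_mul_character_eq A p k

lemma summable_norm_pow_mul_fourierEval (hA : seriesNorm r A ≠ ∞) (hp : |p.1| ≤ r) :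
    Summable fun k => ‖(p.1 : ℂ) ^ k * fourierEval (A k) p.2‖ := by
  have hsum := summable_norm_seriesEval hA hp
  refine hsum.prod.of_nonneg_of_le (fun _ => norm_nonneg _) fun k => ?_
  rw [← tsum_mul_character_eq]
  exact norm_tsum_le_tsum_norm (hsum.prod_factor k)

lemma seriesEval_seriesMul (hr : 0 < r) (hA : seriesNorm r A ≠ ∞) (hB : seriesNorm r B ≠ ∞)
    (hp : |p.1| ≤ r) : seriesEval (seriesMul A B) p = seriesEval A p * seriesEval B p := by
  have hAB : seriesNorm r (seriesMul A B) ≠ ∞ :=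
    ne_top_of_le_ne_top (ENNReal.mul_ne_top hA hB) (seriesNorm_seriesMul_le hr.le A B)
  have hconv : ∀ i j, Summable fun ξ => ‖conv (A i) (B j) ξ‖ := fun i j =>
    summable_norm_of_coeffNorm_ne_top (by positivity) <| ne_top_of_le_ne_top
      (ENNReal.mul_ne_top (coeffNorm_ne_top_of_seriesNorm_ne_top hr hA i)
        (coeffNorm_ne_top_of_seriesNorm_ne_top hr hB j)) <|
      coeffNorm_conv_le (by positivity : 0 ≤ 2 * Real.pi * r) (A i) (B j)
  rw [seriesEval_eq_tsum_fourierEval hA hp, seriesEval_eq_tsum_fourierEval hB hp,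
    seriesEval_eq_tsum_fourierEval hAB hp,
    tsum_mul_tsum_eq_tsum_sum_antidiagonal_of_summable_norm
      (summable_norm_pow_mul_fourierEval hA hp) (summable_norm_pow_mul_fourierEval hB hp)]
  refine tsum_congr fun k => ?_
  rw [seriesMul, fourierEval_sum fun _ _ => hconv _ _, mul_sum]
  refine sum_congr rfl fun q hq => ?_
  rw [fourierEval_conv (summable_norm_coeff hr hA _) (summable_norm_coeff hr hB _),
    ← mem_antidiagonal.1 hq, pow_add]
  ring

end Algebra

/-! ### Derivatives and analyticity of Fourier–Taylor series -/

/-- The time coordinate as a complex-valued linear form on spacetime. -/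
noncomputable def timeForm : ℝ × Space m →L[ℝ] ℂ :=
  Complex.ofRealCLM ∘L ContinuousLinearMap.fst ℝ ℝ (Space m)

lemma norm_timeForm_le : ‖(timeForm : ℝ × Space m →L[ℝ] ℂ)‖ ≤ 1 := by
  refine ContinuousLinearMap.opNorm_le_bound _ zero_le_one fun p => ?_
  rw [timeForm, ContinuousLinearMap.comp_apply, Complex.ofRealCLM_apply, Complex.norm_real, one_mul]
  exact norm_fst_le p

/-- The linear form `(t, x) ↦ 2 π i ξ · x` on spacetime. -/
noncomputable def spacePhase (ξ : Freq m) : ℝ × Space m →L[ℝ] ℂ :=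
  phase ξ ∘L ContinuousLinearMap.snd ℝ ℝ (Space m)

lemma norm_spacePhase_le (ξ : Freq m) : ‖spacePhase ξ‖ ≤ 2 * Real.pi * freqSize ξ :=
  (ContinuousLinearMap.opNorm_comp_le _ _).trans <| (mul_le_of_le_one_right (norm_nonneg _)
    (ContinuousLinearMap.norm_snd_le ℝ ℝ (Space m))).trans (norm_phase_le ξ)

/-- The derivative of `(t, x) ↦ t ^ k exp (2 π i ξ · x)`, where `q = (k, ξ)`. -/
noncomputable def modeDeriv (q : ℕ × Freq m) (p : ℝ × Space m) : ℝ × Space m →L[ℝ] ℂ :=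
  (q.1 * (p.1 : ℂ) ^ (q.1 - 1) * character q.2 p.2) • timeForm +
    ((p.1 : ℂ) ^ q.1 * character q.2 p.2) • spacePhase q.2

lemma hasFDerivAt_mode (q : ℕ × Freq m) (p : ℝ × Space m) :
    HasFDerivAt (fun p : ℝ × Space m => (p.1 : ℂ) ^ q.1 * character q.2 p.2) (modeDeriv q p) p := by
  have htime : HasFDerivAt (fun p : ℝ × Space m => (p.1 : ℂ)) timeForm p := timeForm.hasFDerivAt
  have hspace : HasFDerivAt (fun p : ℝ × Space m => phase q.2 p.2) (spacePhase q.2) p :=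
    (spacePhase q.2).hasFDerivAt
  refine ((htime.pow q.1).mul hspace.cexp).congr_fderiv <| ContinuousLinearMap.ext fun w => ?_
  simp only [modeDeriv, character, add_apply, smul_apply, smul_eq_mul, nsmul_eq_mul]
  ring

lemma norm_modeDeriv_le {r r' : ℝ} (h : r < r') (q : ℕ × Freq m) {p : ℝ × Space m}
    (hp : |p.1| ≤ r) :
    ‖modeDeriv q p‖ ≤
      2 * (r' - r)⁻¹ * (r' ^ q.1 * Real.exp (2 * Real.pi * r' * freqSize q.2)) := by
  have hr : 0 ≤ r := (abs_nonneg _).trans hp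
  have hδ : 0 < r' - r := sub_pos.2 h
  have hr' : 0 ≤ r' := hr.trans h.le
  have hξ := freqSize_nonneg q.2
  have htime : ‖(q.1 * (p.1 : ℂ) ^ (q.1 - 1) * character q.2 p.2) • timeForm (m := m)‖ ≤
      (r' - r)⁻¹ * r' ^ q.1 := by
    rw [norm_smul, norm_mul, norm_mul, norm_character, norm_pow, Complex.norm_natCast,
      Complex.norm_real, Real.norm_eq_abs, mul_one]
    calc q.1 * |p.1| ^ (q.1 - 1) * ‖timeForm‖ ≤ q.1 * r ^ (q.1 - 1) * 1 := by
          gcongr; exact norm_timeForm_le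
      _ ≤ (r' - r)⁻¹ * r' ^ q.1 := (mul_one _).trans_le (natCast_mul_pow_le hr h q.1)
  have hspace : ‖((p.1 : ℂ) ^ q.1 * character q.2 p.2) • spacePhase q.2‖ ≤
      r' ^ q.1 * ((r' - r)⁻¹ * Real.exp (2 * Real.pi * (r' - r) * freqSize q.2)) := by
    rw [norm_smul, norm_mul, norm_character, norm_pow, Complex.norm_real, Real.norm_eq_abs, mul_one]
    gcongr
    · exact hp.trans h.le
    · refine (norm_spacePhase_le q.2).trans ((le_inv_mul_iff₀ hδ).2 ?_)
      linarith [Real.add_one_le_exp (2 * Real.pi * (r' - r) * freqSize q.2)]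
  have hexp : 1 ≤ Real.exp (2 * Real.pi * r' * freqSize q.2) :=
    Real.one_le_exp (by positivity)
  calc ‖modeDeriv q p‖ ≤ (r' - r)⁻¹ * r' ^ q.1 +
        r' ^ q.1 * ((r' - r)⁻¹ * Real.exp (2 * Real.pi * (r' - r) * freqSize q.2)) :=
        (norm_add_le _ _).trans (add_le_add htime hspace)
    _ ≤ (r' - r)⁻¹ * r' ^ q.1 * Real.exp (2 * Real.pi * r' * freqSize q.2) +
        r' ^ q.1 * ((r' - r)⁻¹ * Real.exp (2 * Real.pi * r' * freqSize q.2)) := by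
        refine add_le_add (le_mul_of_one_le_right (by positivity) hexp) ?_
        gcongr _ * (_ * Real.exp (_ * ?_ * _))
        exact sub_le_self _ hr
    _ = _ := by ring

section Calculus

variable {r : ℝ} {A : TimeSeries m} {p : ℝ × Space m}

lemma norm_smul_modeDeriv_le {r' : ℝ} (h : r' < r) (q : ℕ × Freq m) (hp : |p.1| ≤ r') :
    ‖A q.1 q.2 • modeDeriv q p‖ ≤ 2 * (r - r')⁻¹ *
      (‖A q.1 q.2‖ * r ^ q.1 * Real.exp (2 * Real.pi * r * freqSize q.2)) := by
  rw [norm_smul]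
  calc ‖A q.1 q.2‖ * ‖modeDeriv q p‖ ≤ ‖A q.1 q.2‖ *
        (2 * (r - r')⁻¹ * (r ^ q.1 * Real.exp (2 * Real.pi * r * freqSize q.2))) := by
        gcongr
        exact norm_modeDeriv_le h q hp
    _ = _ := by ring

lemma hasSum_smul_modeDeriv (hA : seriesNorm r A ≠ ∞) (hp : |p.1| < r) :
    HasSum (fun q => A q.1 q.2 • modeDeriv q p) (fderiv ℝ (seriesEval A) p) := by
  obtain ⟨r', hpr', hr'r⟩ := exists_between hp
  have hr : 0 ≤ r := (abs_nonneg _).trans hp.le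
  have hbound := (summable_weighted hr hA).mul_left (2 * (r - r')⁻¹)
  have hsum : Summable fun q => A q.1 q.2 • modeDeriv q p :=
    hbound.of_norm_bounded fun q => norm_smul_modeDeriv_le hr'r q hpr'.le
  have hslab : {y : ℝ × Space m | |y.1| < r'} = Set.Ioo (-r') r' ×ˢ Set.univ := by
    ext y; simp [abs_lt]
  have hderiv : HasFDerivAt (seriesEval A) (∑' q, A q.1 q.2 • modeDeriv q p) p := by
    refine hasFDerivAt_tsum_of_isPreconnected hbound (s := {y : ℝ × Space m | |y.1| < r'}) ?_ ?_
      (fun q y _ => (hasFDerivAt_mode q y).const_mul (A q.1 q.2))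
      (fun q y hy => norm_smul_modeDeriv_le hr'r q (le_of_lt hy)) hpr'
      (summable_norm_seriesEval hA hp.le).of_norm hpr'
    · rw [hslab]
      exact isOpen_Ioo.prod isOpen_univ
    · rw [hslab]
      exact isPreconnected_Ioo.prod isPreconnected_univ
  exact hderiv.fderiv ▸ hsum.hasSum

lemma fderiv_seriesEval_apply (hA : seriesNorm r A ≠ ∞) (hp : |p.1| < r) (w : ℝ × Space m) :
    fderiv ℝ (seriesEval A) p w = ∑' q : ℕ × Freq m, A q.1 q.2 * modeDeriv q p w :=
  ((hasSum_smul_modeDeriv hA hp).mapL (ContinuousLinearMap.apply ℝ ℂ w)).tsum_eq.symm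

lemma fderiv_seriesEval_time (hA : seriesNorm r A ≠ ∞) (hp : |p.1| < r) :
    fderiv ℝ (seriesEval A) p (1, 0) = seriesEval (timeDeriv A) p := by
  have hinj : Function.Injective (Prod.map Nat.succ id : ℕ × Freq m → ℕ × Freq m) :=
    Nat.succ_injective.prodMap Function.injective_id
  rw [fderiv_seriesEval_apply hA hp, seriesEval, ← hinj.tsum_eq]
  · refine tsum_congr fun q => ?_
    simp only [modeDeriv, timeForm, spacePhase, timeDeriv, Prod.map_fst, Prod.map_snd, id_eq,
      add_apply, smul_apply, smul_eq_mul, ContinuousLinearMap.comp_apply,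
      ContinuousLinearMap.coe_fst', ContinuousLinearMap.coe_snd', map_zero, mul_zero, add_zero,
      Complex.ofRealCLM_apply, Nat.succ_eq_add_one, Nat.add_sub_cancel, Pi.smul_apply]
    push_cast
    ring
  · refine Function.support_subset_iff'.2 fun ⟨k, ξ⟩ h => ?_
    cases k with
    | zero => simp [modeDeriv, spacePhase]
    | succ k => exact absurd ⟨(k, ξ), rfl⟩ h

lemma fderiv_seriesEval_single (hA : seriesNorm r A ≠ ∞) (hp : |p.1| < r) (j : Fin m) :
    fderiv ℝ (seriesEval A) p (0, EuclideanSpace.single j 1) =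
      seriesEval (applySymbol (derivSymbol j) A) p := by
  rw [fderiv_seriesEval_apply hA hp, seriesEval]
  refine tsum_congr fun q => ?_
  simp only [modeDeriv, timeForm, spacePhase, applySymbol, add_apply, smul_apply, smul_eq_mul,
    ContinuousLinearMap.comp_apply, ContinuousLinearMap.coe_fst', ContinuousLinearMap.coe_snd',
    map_zero, mul_zero, zero_add, phase_single, Pi.mul_apply]
  ring

lemma analyticAt_seriesEval (hA : seriesNorm r A ≠ ∞) (hp : |p.1| < r) :
    AnalyticAt ℝ (seriesEval A) p := by
  have hr : 0 < r := (abs_nonneg _).trans_lt hp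
  lift r to ℝ≥0 using hr.le
  let f : ℕ × Freq m → ℝ × Space m → ℂ := fun q y =>
    A q.1 q.2 * ((y.1 : ℂ) ^ q.1 * character q.2 y.2)
  let c : ℕ × Freq m → ℂ := fun q => A q.1 q.2 * character q.2 p.2
  have hseries : ∀ q y, HasSum (fun n => powMulExpSeries (c q) timeForm (spacePhase q.2) q.1 n
      fun _ => y) (f q ((0, p.2) + y)) := fun q y => by
    convert hasSum_powMulExpSeries (c q) timeForm (spacePhase q.2) q.1 y using 1
    simp only [f, c, Prod.fst_add, Prod.snd_add, zero_add, character_add_right]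
    change _ = A q.1 q.2 * character q.2 p.2 * (y.1 : ℂ) ^ q.1 * character q.2 y.2
    ring
  have hnorm : ∑' q, ∑' n, ENNReal.ofReal
      (‖powMulExpSeries (c q) timeForm (spacePhase q.2) q.1 n‖ * r ^ n) ≠ ∞ := by
    rw [← tsum_ofReal_weighted_eq_seriesNorm hr.le] at hA
    refine ne_top_of_le_ne_top hA <| ENNReal.tsum_le_tsum fun q =>
      (tsum_ofReal_norm_powMulExpSeries_le _ _ _ _ _).trans <| ENNReal.ofReal_le_ofReal ?_
    rw [norm_mul, norm_character, mul_one]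
    have hphase : ‖spacePhase q.2‖ * r ≤ 2 * Real.pi * r * freqSize q.2 :=
      (mul_le_mul_of_nonneg_right (norm_spacePhase_le q.2) r.coe_nonneg).trans_eq (by ring)
    gcongr
    exact mul_le_of_le_one_left r.2 norm_timeForm_le
  refine (hasFPowerSeriesOnBall_tsum (NNReal.coe_pos.1 hr) hnorm hseries).analyticAt_of_mem ?_
  rw [Metric.mem_eball, edist_eq_enorm_sub, enorm_lt_coe]
  simpa [Prod.norm_def, ← NNReal.coe_lt_coe] using hp

end Calculus

/-- The real-valued function on spacetime with Fourier–Taylor coefficients `A`. -/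
noncomputable def realEval (A : TimeSeries m) (p : ℝ × Space m) : ℝ := (seriesEval A p).re

lemma realEval_add_lattice (A : TimeSeries m) (t : ℝ) (x : Space m) (z : Fin m → ℤ) :
    realEval A (t, x + lattice z) = realEval A (t, x) := by
  rw [realEval, realEval, seriesEval_add_lattice]

lemma realEval_zero (p : ℝ × Space m) : realEval 0 p = 0 := by simp [realEval, seriesEval]

lemma realEval_neg (A : TimeSeries m) (p : ℝ × Space m) : realEval (-A) p = -realEval A p := by
  rw [realEval, seriesEval_neg, Complex.neg_re, realEval]

namespace IsAnalyticSeries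

variable {ε : ℝ} {A B : TimeSeries m} {p : ℝ × Space m}

lemma exists_seriesNorm_ne_top (hA : IsAnalyticSeries ε A) (hp : |p.1| < ε) :
    ∃ r, |p.1| < r ∧ seriesNorm r A ≠ ∞ := by
  obtain ⟨r, hpr, hr⟩ := exists_between hp
  exact ⟨r, hpr, hA.seriesNorm_ne_top r ((abs_nonneg _).trans hpr.le) hr⟩

lemma realEval_add (hA : IsAnalyticSeries ε A) (hB : IsAnalyticSeries ε B) (hp : |p.1| < ε) :
    realEval (A + B) p = realEval A p + realEval B p := by
  rw [realEval, seriesEval_add (hA.seriesNorm_ne_top _ (abs_nonneg _) hp)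
    (hB.seriesNorm_ne_top _ (abs_nonneg _) hp) le_rfl, Complex.add_re, realEval, realEval]

lemma realEval_sum {κ : Type*} {I : Finset κ} {f : κ → TimeSeries m}
    (h : ∀ i, IsAnalyticSeries ε (f i)) (hp : |p.1| < ε) :
    realEval (∑ i ∈ I, f i) p = ∑ i ∈ I, realEval (f i) p := by
  classical
  induction I using Finset.induction_on with
  | empty => exact realEval_zero p
  | insert i I hi ih =>
    rw [sum_insert hi, sum_insert hi, (h i).realEval_add (sum fun i _ => h i) hp, ih]

lemma realEval_seriesMul (hA : IsAnalyticSeries ε A) (hB : IsAnalyticSeries ε B)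
    (hp : |p.1| < ε) :
    realEval (seriesMul A B) p = realEval A p * realEval B p := by
  obtain ⟨r, hpr, hr⟩ := exists_between hp
  have hr0 := (abs_nonneg _).trans_lt hpr
  rw [realEval, seriesEval_seriesMul hr0 (hA.seriesNorm_ne_top r hr0.le hr)
    (hB.seriesNorm_ne_top r hr0.le hr) hpr.le, ← ofReal_re_seriesEval hA.isHermitianSymm,
    ← ofReal_re_seriesEval hB.isHermitianSymm, ← Complex.ofReal_mul, Complex.ofReal_re, realEval,
    realEval]

lemma analyticAt_realEval (hA : IsAnalyticSeries ε A) (hp : |p.1| < ε) :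
    AnalyticAt ℝ (realEval A) p := by
  obtain ⟨r, hpr, hr⟩ := hA.exists_seriesNorm_ne_top hp
  exact (Complex.reCLM.analyticAt _).comp (analyticAt_seriesEval hr hpr)

lemma fderiv_realEval (hA : IsAnalyticSeries ε A) (hp : |p.1| < ε) (w : ℝ × Space m) :
    fderiv ℝ (realEval A) p w = (fderiv ℝ (seriesEval A) p w).re := by
  obtain ⟨r, hpr, hr⟩ := hA.exists_seriesNorm_ne_top hp
  exact DFunLike.congr_fun (Complex.reCLM.hasFDerivAt.comp p
    (analyticAt_seriesEval hr hpr).differentiableAt.hasFDerivAt).fderiv w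

lemma fderiv_realEval_time (hA : IsAnalyticSeries ε A) (hp : |p.1| < ε) :
    fderiv ℝ (realEval A) p (1, 0) = realEval (timeDeriv A) p := by
  obtain ⟨r, hpr, hr⟩ := hA.exists_seriesNorm_ne_top hp
  rw [hA.fderiv_realEval hp, fderiv_seriesEval_time hr hpr, realEval]

lemma fderiv_realEval_single (hA : IsAnalyticSeries ε A) (hp : |p.1| < ε) (j : Fin m) :
    fderiv ℝ (realEval A) p (0, EuclideanSpace.single j 1) =
      realEval (applySymbol (derivSymbol j) A) p := by
  obtain ⟨r, hpr, hr⟩ := hA.exists_seriesNorm_ne_top hp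
  rw [hA.fderiv_realEval hp, fderiv_seriesEval_single hr hpr, realEval]

end IsAnalyticSeries

/-! ### Taylor expansion of the solution in time -/

open Finset.HasAntidiagonal.antidiagonal (fst_le snd_le)

/-- The coefficients of the time derivatives of the density (`none`) and of the velocity components
(`some j`), as prescribed by the equation with `φ = Λ⁻² n`. -/
noncomputable def rhs (A : Option (Fin m) → TimeSeries m) : Option (Fin m) → TimeSeries m
  | none => -∑ i, applySymbol (derivSymbol i) (seriesMul (A none) (A (some i)))
  | some j => -(∑ i, seriesMul (A (some i)) (applySymbol (derivSymbol i) (A (some j))) +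
      applySymbol (derivSymbol j) (applySymbol helmholtzInvSymbol (A none)))

lemma seriesMul_congr {A A' B B' : TimeSeries m} {k : ℕ} (hA : ∀ i ≤ k, A i = A' i)
    (hB : ∀ i ≤ k, B i = B' i) : seriesMul A B k = seriesMul A' B' k :=
  sum_congr rfl fun p hp => by rw [hA _ (fst_le hp), hB _ (snd_le hp)]

lemma rhs_congr {A A' : Option (Fin m) → TimeSeries m} {k : ℕ} (h : ∀ i ≤ k, ∀ c, A c i = A' c i)
    (c : Option (Fin m)) : rhs A c k = rhs A' c k := by
  have hc (c) : ∀ i ≤ k, A c i = A' c i := fun i hi => h i hi c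
  cases c with
  | none => simp only [rhs, applySymbol, Pi.neg_apply, Finset.sum_apply,
      seriesMul_congr (hc none) (hc (some _))]
  | some j =>
    have hD (i) : ∀ l ≤ k, applySymbol (derivSymbol i) (A (some j)) l =
        applySymbol (derivSymbol i) (A' (some j)) l := fun l hl => by
      rw [applySymbol, applySymbol, hc _ l hl]
    simp only [rhs, Pi.neg_apply, Pi.add_apply, Finset.sum_apply,
      seriesMul_congr (hc (some _)) (hD _)]
    simp only [applySymbol, hc none k le_rfl]

/-- The Taylor coefficients in time of the solution with initial Fourier coefficients `u₀`. -/
noncomputable def taylorCoeff (u₀ : Option (Fin m) → Coeff m) : ℕ → Option (Fin m) → Coeff m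
  | 0 => u₀
  | k + 1 => fun c => (((k + 1 : ℝ)⁻¹ : ℝ) : ℂ) •
      rhs (fun c i => if _ : i ≤ k then taylorCoeff u₀ i c else 0) c k

/-- The Fourier–Taylor coefficients of the solution with initial Fourier coefficients `u₀`. -/
noncomputable def solutionSeries (u₀ : Option (Fin m) → Coeff m) (c : Option (Fin m)) :
    TimeSeries m := fun k => taylorCoeff u₀ k c

section Recursion

variable {u₀ : Option (Fin m) → Coeff m}

lemma solutionSeries_zero (c : Option (Fin m)) : solutionSeries u₀ c 0 = u₀ c := by
  rw [solutionSeries, taylorCoeff]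

lemma solutionSeries_succ (c : Option (Fin m)) (k : ℕ) :
    solutionSeries u₀ c (k + 1) =
      (((k + 1 : ℝ)⁻¹ : ℝ) : ℂ) • rhs (solutionSeries u₀) c k := by
  rw [solutionSeries, taylorCoeff]
  refine congr_arg (_ • ·) (rhs_congr (fun i hi c => ?_) c)
  exact dif_pos hi

lemma timeDeriv_solutionSeries (c : Option (Fin m)) :
    timeDeriv (solutionSeries u₀ c) = rhs (solutionSeries u₀) c := by
  funext k
  rw [timeDeriv, solutionSeries_succ, smul_smul, ← Complex.ofReal_mul,
    mul_inv_cancel₀ (Nat.cast_add_one_ne_zero k), Complex.ofReal_one, one_smul]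

lemma isHermitianSymm_seriesMul {A B : TimeSeries m} {k : ℕ} (hA : ∀ i ≤ k, IsHermitianSymm (A i))
    (hB : ∀ i ≤ k, IsHermitianSymm (B i)) : IsHermitianSymm (seriesMul A B k) :=
  .sum fun _ hp => (hA _ (fst_le hp)).conv (hB _ (snd_le hp))

lemma isHermitianSymm_rhs {A : Option (Fin m) → TimeSeries m} {k : ℕ}
    (hA : ∀ i ≤ k, ∀ c, IsHermitianSymm (A c i)) (c : Option (Fin m)) :
    IsHermitianSymm (rhs A c k) := by
  have hc (c) : ∀ i ≤ k, IsHermitianSymm (A c i) := fun i hi => hA i hi c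
  have hneg {a : Coeff m} (ha : IsHermitianSymm a) : IsHermitianSymm (-a) := by
    simpa using ha.real_smul (-1)
  cases c with
  | none =>
    refine hneg ?_
    rw [Finset.sum_apply]
    exact .sum fun i _ => (isHermitianSymm_derivSymbol i).mul
      (isHermitianSymm_seriesMul (hc none) (hc (some i)))
  | some j =>
    refine hneg (.add ?_ ((isHermitianSymm_derivSymbol j).mul
      (isHermitianSymm_helmholtzInvSymbol.mul (hc none k le_rfl))))
    rw [Finset.sum_apply]
    exact .sum fun i _ => isHermitianSymm_seriesMul (hc (some i))
      fun l hl => (isHermitianSymm_derivSymbol i).mul (hc (some j) l hl)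

lemma isHermitianSymm_solutionSeries (hu₀ : ∀ c, IsHermitianSymm (u₀ c)) (k : ℕ)
    (c : Option (Fin m)) : IsHermitianSymm (solutionSeries u₀ c k) := by
  induction k using Nat.strong_induction_on generalizing c with
  | _ k ih =>
    cases k with
    | zero => exact (solutionSeries_zero c).symm ▸ hu₀ c
    | succ k =>
      rw [solutionSeries_succ]
      exact (isHermitianSymm_rhs (fun i hi => ih i (Nat.lt_succ_of_le hi)) c).real_smul _

end Recursion

section Majorant

lemma coeffNorm_seriesMul_le {s : ℝ} {C : ℝ≥0∞} {A B : TimeSeries m} {k : ℕ} {b : ℕ → ℝ≥0∞}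
    (hs : 0 ≤ s) (hA : ∀ i ≤ k, coeffNorm s (A i) ≤ b i)
    (hB : ∀ i ≤ k, coeffNorm s (B i) ≤ C * b i) :
    coeffNorm s (seriesMul A B k) ≤ C * ∑ p ∈ antidiagonal k, b p.1 * b p.2 := by
  refine (coeffNorm_sum_le _ _ _).trans ?_
  rw [mul_sum]
  refine sum_le_sum fun p hp => (coeffNorm_conv_le hs _ _).trans ?_
  rw [mul_left_comm]
  exact mul_le_mul' (hA _ (fst_le hp)) (hB _ (snd_le hp))

lemma coeffNorm_neg (s : ℝ) (a : Coeff m) : coeffNorm s (-a) = coeffNorm s a := by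
  rw [← neg_one_smul ℂ a, coeffNorm_smul, enorm_neg, enorm_one, one_mul]

lemma coeffNorm_rhs_le {s δ : ℝ} {A : Option (Fin m) → TimeSeries m} {k : ℕ} {b : ℕ → ℝ≥0∞}
    (hs : 0 ≤ s) (hδ : 0 < δ) (hA : ∀ i ≤ k, ∀ c, coeffNorm (s + δ) (A c i) ≤ b i)
    (hb : 1 ≤ b 0) (c : Option (Fin m)) :
    coeffNorm s (rhs A c k) ≤
      (m + 1) * (.ofReal (2 * Real.pi / δ) * ∑ p ∈ antidiagonal k, b p.1 * b p.2) := by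
  set L := ENNReal.ofReal (2 * Real.pi / δ)
  set Q := ∑ p ∈ antidiagonal k, b p.1 * b p.2
  have hc (c) : ∀ i ≤ k, coeffNorm (s + δ) (A c i) ≤ b i := fun i hi => hA i hi c
  have hderiv {j : Fin m} {a : Coeff m} {x : ℝ≥0∞} (ha : coeffNorm (s + δ) a ≤ x) :
      coeffNorm s (derivSymbol j * a) ≤ L * x :=
    (coeffNorm_derivSymbol_mul_le hδ j a).trans (mul_le_mul_right ha _)
  have hsum {f : Fin m → Coeff m} (hf : ∀ i, coeffNorm s (f i) ≤ L * Q) :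
      coeffNorm s (∑ i, f i) ≤ m * (L * Q) :=
    (coeffNorm_sum_le _ _ _).trans ((sum_le_card_nsmul _ _ _ fun i _ => hf i).trans_eq (by simp))
  cases c with
  | none =>
    rw [rhs, Pi.neg_apply, coeffNorm_neg, Finset.sum_apply]
    refine (hsum fun i => hderiv ?_).trans (by gcongr; exact le_self_add)
    simpa using coeffNorm_seriesMul_le (C := 1) (by positivity) (hc none)
      (by simpa using hc (some i))
  | some j =>
    rw [rhs, Pi.neg_apply, coeffNorm_neg, Pi.add_apply, Finset.sum_apply, add_mul, one_mul]
    refine (coeffNorm_add_le _ _ _).trans (add_le_add (hsum fun i => ?_) (hderiv ?_))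
    · exact coeffNorm_seriesMul_le hs
        (fun l hl => (coeffNorm_mono (by linarith) _).trans (hc (some i) l hl))
        (fun l hl => hderiv (hc (some j) l hl))
    · calc coeffNorm (s + δ) (applySymbol helmholtzInvSymbol (A none) k)
          ≤ coeffNorm (s + δ) (A none k) := coeffNorm_helmholtzInvSymbol_mul_le _ _
        _ ≤ b 0 * b k := (hc none k le_rfl).trans (le_mul_of_one_le_left' hb)
        _ ≤ Q := single_le_sum_of_canonicallyOrdered
          (f := fun p : ℕ × ℕ => b p.1 * b p.2) (by simp : (0, k) ∈ antidiagonal k)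

/-- The Taylor coefficients of the solution `y` of `y = M + M⁻¹ X T y²` at `T = 0`, which dominate
those of the Euler–Poisson system. -/
noncomputable def catalanMajorant (M X : ℝ) (k : ℕ) : ℝ := M * catalan k * X ^ k

lemma catalanMajorant_nonneg {M X : ℝ} (hM : 0 ≤ M) (hX : 0 ≤ X) (k : ℕ) :
    0 ≤ catalanMajorant M X k := by
  unfold catalanMajorant
  positivity

lemma sum_antidiagonal_catalanMajorant (M X : ℝ) (k : ℕ) :
    ∑ p ∈ antidiagonal k, catalanMajorant M X p.1 * catalanMajorant M X p.2 =
      M ^ 2 * catalan (k + 1) * X ^ k := by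
  rw [catalan_succ', Nat.cast_sum, mul_sum, sum_mul]
  refine sum_congr rfl fun p hp => ?_
  rw [catalanMajorant, catalanMajorant, ← mem_antidiagonal.1 hp, pow_add, Nat.cast_mul]
  ring

lemma catalan_le_four_pow (k : ℕ) : catalan k ≤ 4 ^ k :=
  (Nat.le_mul_of_pos_left _ k.succ_pos).trans <|
    (succ_mul_catalan_eq_centralBinom k).trans_le (Nat.centralBinom_le_four_pow k)

lemma add_two_div_add_one_pow_le (k : ℕ) : ((k + 2 : ℝ) / (k + 1)) ^ k ≤ Real.exp 1 := by
  have hk : ((k + 2 : ℝ) / (k + 1)) = (k + 1 : ℝ)⁻¹ + 1 := by field_simp; ring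
  calc ((k + 2 : ℝ) / (k + 1)) ^ k ≤ Real.exp (k + 1 : ℝ)⁻¹ ^ k := by
        rw [hk]; gcongr; exact Real.add_one_le_exp _
    _ ≤ Real.exp 1 := by
        rw [← Real.exp_nat_mul, ← div_eq_mul_inv]
        gcongr
        exact (div_le_one (by positivity)).2 (by linarith)

/-- The growth rate of the Taylor coefficients per unit of analyticity width, for initial data of
size `M`. -/
noncomputable def growthRate (m : ℕ) (M : ℝ) : ℝ := 4 * Real.pi * Real.exp 1 * (m + 1) * M

/-- A derivative spends the part `δ / (k + 2)` of the width `δ`; the resulting factor `k + 2` is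
absorbed by the `1 / (k + 1)` from integration in time. -/
lemma inv_mul_catalanMajorant_le {M δ : ℝ} (hM : 0 < M) (hδ : 0 < δ) (k : ℕ) :
    (k + 1 : ℝ)⁻¹ * ((m + 1) * (2 * Real.pi / (δ / (k + 2)) *
        (M ^ 2 * catalan (k + 1) * (growthRate m M / (δ * ((k + 1) / (k + 2)))) ^ k))) ≤
      catalanMajorant M (growthRate m M / δ) (k + 1) := by
  have hK : 0 ≤ growthRate m M := by unfold growthRate; positivity
  have hpow : (growthRate m M / (δ * ((k + 1) / (k + 2)))) ^ k ≤
      (growthRate m M / δ) ^ k * Real.exp 1 := by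
    calc (growthRate m M / (δ * ((k + 1) / (k + 2)))) ^ k =
          (growthRate m M / δ) ^ k * ((k + 2 : ℝ) / (k + 1)) ^ k := by
          rw [← mul_pow]
          congr 1
          field_simp
      _ ≤ (growthRate m M / δ) ^ k * Real.exp 1 := by
          gcongr
          exact add_two_div_add_one_pow_le k
  have hratio : (k + 2 : ℝ) / (k + 1) ≤ 2 := by
    rw [div_le_iff₀ (by positivity)]
    linarith [k.cast_nonneg (α := ℝ)]
  calc _ = (k + 2 : ℝ) / (k + 1) * ((m + 1) * (2 * Real.pi / δ) * (M ^ 2 * catalan (k + 1))) *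
          (growthRate m M / (δ * ((k + 1) / (k + 2)))) ^ k := by
        generalize (growthRate m M / (δ * ((k + 1) / (k + 2)))) ^ k = X
        field_simp
    _ ≤ 2 * ((m + 1) * (2 * Real.pi / δ) * (M ^ 2 * catalan (k + 1))) *
          ((growthRate m M / δ) ^ k * Real.exp 1) := by
        gcongr
    _ = catalanMajorant M (growthRate m M / δ) (k + 1) := by
        rw [catalanMajorant, pow_succ _ k]
        generalize (growthRate m M / δ) ^ k = X
        rw [growthRate]
        field_simp
        ring

lemma coeffNorm_solutionSeries_le {s M : ℝ} {u₀ : Option (Fin m) → Coeff m} (hM : 1 ≤ M)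
    (hu₀ : ∀ c, coeffNorm s (u₀ c) ≤ .ofReal M) (k : ℕ) (c : Option (Fin m)) {δ : ℝ} (hδ : 0 < δ)
    (hδs : δ ≤ s) :
    coeffNorm (s - δ) (solutionSeries u₀ c k) ≤
      .ofReal (catalanMajorant M (growthRate m M / δ) k) := by
  induction k using Nat.strong_induction_on generalizing c δ with
  | _ k ih =>
  cases k with
  | zero =>
    rw [solutionSeries_zero]
    simpa [catalanMajorant] using (coeffNorm_mono (by linarith) _).trans (hu₀ c)
  | succ k =>
    have hM0 : 0 < M := zero_lt_one.trans_le hM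
    set δ' := δ * ((k + 1) / (k + 2))
    have hδ' : 0 < δ' := by positivity
    have hδδ' : s - δ + δ / (k + 2) = s - δ' := by
      simp only [δ']; field_simp; ring
    have hX : 0 ≤ growthRate m M / δ' := by unfold growthRate; positivity
    have hloss : 0 < δ / (k + 2) := by positivity
    have hrhs := coeffNorm_rhs_le (sub_nonneg.2 hδs) hloss
      (b := fun i => .ofReal (catalanMajorant M (growthRate m M / δ') i))
      (fun i hi c => hδδ' ▸ ih i (Nat.lt_succ_of_le hi) c hδ' (by linarith))
      (by simpa [catalanMajorant] using hM) c
    have hmaj := catalanMajorant_nonneg hM0.le hX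
    simp only [← ENNReal.ofReal_mul (hmaj _)] at hrhs
    rw [← ENNReal.ofReal_sum_of_nonneg fun p _ => mul_nonneg (hmaj _) (hmaj _),
      sum_antidiagonal_catalanMajorant] at hrhs
    have hm : (m + 1 : ℝ≥0∞) = .ofReal (m + 1) := by
      rw [ENNReal.ofReal_add m.cast_nonneg zero_le_one, ENNReal.ofReal_natCast, ENNReal.ofReal_one]
    rw [solutionSeries_succ, coeffNorm_smul, ← ofReal_norm, Complex.norm_real,
      Real.norm_of_nonneg (by positivity)]
    grw [hrhs]
    rw [hm, ← ENNReal.ofReal_mul (by positivity), ← ENNReal.ofReal_mul (by positivity),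
      ← ENNReal.ofReal_mul (by positivity)]
    exact ENNReal.ofReal_le_ofReal (inv_mul_catalanMajorant_le hM0 hδ k)

lemma seriesNorm_solutionSeries_ne_top {s M r : ℝ} {u₀ : Option (Fin m) → Coeff m} (hM : 1 ≤ M)
    (hs : 0 < s) (hu₀ : ∀ c, coeffNorm s (u₀ c) ≤ .ofReal M) (hr : 0 ≤ r)
    (hrs : 2 * Real.pi * r ≤ s / 2) (hrK : r * (4 * (growthRate m M / (s / 2))) < 1)
    (c : Option (Fin m)) : seriesNorm r (solutionSeries u₀ c) ≠ ∞ := by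
  set X := growthRate m M / (s / 2)
  have hX : 0 ≤ X := by simp only [X, growthRate]; positivity
  have hgeom : Summable fun k : ℕ => M * (r * (4 * X)) ^ k :=
    (summable_geometric_of_lt_one (by positivity) hrK).mul_left M
  refine ne_top_of_le_ne_top hgeom.tsum_ofReal_ne_top <| ENNReal.tsum_le_tsum fun k => ?_
  calc ENNReal.ofReal (r ^ k) * coeffNorm (2 * Real.pi * r) (solutionSeries u₀ c k)
      ≤ .ofReal (r ^ k) * .ofReal (catalanMajorant M X k) := by
        gcongr
        exact (coeffNorm_mono (by linarith) _).trans
          (coeffNorm_solutionSeries_le hM hu₀ k c (half_pos hs) (half_le_self hs.le))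
    _ = .ofReal (r ^ k * catalanMajorant M X k) := (ENNReal.ofReal_mul (by positivity)).symm
    _ ≤ .ofReal (M * (r * (4 * X)) ^ k) := by
        have hcat : (catalan k : ℝ) ≤ 4 ^ k := mod_cast catalan_le_four_pow k
        refine ENNReal.ofReal_le_ofReal ?_
        calc r ^ k * catalanMajorant M X k ≤ r ^ k * (M * 4 ^ k * X ^ k) := by
              unfold catalanMajorant
              gcongr
          _ = M * (r * (4 * X)) ^ k := by rw [mul_pow, mul_pow]; ring

lemma exists_isAnalyticSeries_solutionSeries {s : ℝ} {u₀ : Option (Fin m) → Coeff m} (hs : 0 < s)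
    (hu₀ : ∀ c, coeffNorm s (u₀ c) ≠ ∞) (hsymm : ∀ c, IsHermitianSymm (u₀ c)) :
    ∃ ε > 0, ∀ c, IsAnalyticSeries ε (solutionSeries u₀ c) := by
  set M : ℝ := 1 + ∑ c, (coeffNorm s (u₀ c)).toReal
  have hM : 1 ≤ M := le_add_of_nonneg_right (sum_nonneg fun c _ => ENNReal.toReal_nonneg)
  have hM₀ (c) : coeffNorm s (u₀ c) ≤ .ofReal M :=
    (ENNReal.le_ofReal_iff_toReal_le (hu₀ c) (zero_le_one.trans hM)).2 <|
      (single_le_sum (f := fun c => (coeffNorm s (u₀ c)).toReal)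
        (fun _ _ => ENNReal.toReal_nonneg) (mem_univ c)).trans
        (le_add_of_nonneg_left zero_le_one)
  set X := growthRate m M / (s / 2)
  have hX : 0 < X := by simp only [X, growthRate]; positivity
  refine ⟨min (s / (4 * Real.pi)) (1 / (4 * X)), by positivity, fun c =>
    ⟨fun r hr hrε => seriesNorm_solutionSeries_ne_top hM hs hM₀ hr ?_ ?_ c,
      fun k => isHermitianSymm_solutionSeries hsymm k c⟩⟩
  · linarith [(lt_div_iff₀ (by positivity)).1 (hrε.trans_le (min_le_left _ _))]
  · exact (lt_div_iff₀ (by positivity)).1 (hrε.trans_le (min_le_right _ _))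

end Majorant

/-! ### Lattice-periodic functions and the torus -/

/-- Invariance under translation by the period lattice `ℤ^m`. -/
def IsLatticePeriodic {α : Type*} (f : Space m → α) : Prop := ∀ x z, f (x + lattice z) = f x

/-- The closed fundamental domain `[0, 1]^m` of the period lattice. -/
def unitCube (m : ℕ) : Set (Space m) := WithLp.ofLp ⁻¹' Set.univ.pi fun _ => Set.Icc 0 1

lemma isCompact_unitCube : IsCompact (unitCube m) :=
  (PiLp.homeomorph 2 fun _ : Fin m => ℝ).isCompact_preimage.2
    (isCompact_univ_pi fun _ => isCompact_Icc)

lemma exists_add_lattice_mem_unitCube (x : Space m) : ∃ z, x + lattice z ∈ unitCube m := by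
  refine ⟨fun i => -⌊x i⌋, fun i _ => ?_⟩
  have hi : (x + lattice fun i => -⌊x i⌋).ofLp i = Int.fract (x i) := by
    simp [Int.fract, sub_eq_add_neg]
  rw [hi]
  exact ⟨Int.fract_nonneg _, (Int.fract_lt_one _).le⟩

lemma IsLatticePeriodic.exists_forall_norm_le {F : Type*} [NormedAddCommGroup F] {f : Space m → F}
    (hf : IsLatticePeriodic f) (hcont : Continuous f) : ∃ C, ∀ x, ‖f x‖ ≤ C := by
  obtain ⟨C, hC⟩ := isCompact_unitCube.exists_bound_of_continuousOn hcont.continuousOn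
  refine ⟨C, fun x => ?_⟩
  obtain ⟨z, hz⟩ := exists_add_lattice_mem_unitCube x
  exact hf x z ▸ hC _ hz

lemma IsLatticePeriodic.comp_add_right {α : Type*} {f : Space m → α} (hf : IsLatticePeriodic f)
    (w : Space m) : IsLatticePeriodic fun x => f (x + w) := fun x z => by
  simpa only [add_right_comm] using hf (x + w) z

protected lemma IsLatticePeriodic.fderiv {F : Type*} [NormedAddCommGroup F] [NormedSpace ℝ F]
    {f : Space m → F} (hf : IsLatticePeriodic f) : IsLatticePeriodic (fderiv ℝ f) := fun x z => by
  rw [← fderiv_comp_add_right]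
  exact congr_arg (fderiv ℝ · x) (funext fun y => hf y z)

protected lemma IsLatticePeriodic.iteratedFDeriv {F : Type*} [NormedAddCommGroup F]
    [NormedSpace ℝ F] {f : Space m → F} (hf : IsLatticePeriodic f) (n : ℕ) :
    IsLatticePeriodic (iteratedFDeriv ℝ n f) := fun x z => by
  rw [← iteratedFDeriv_comp_add_right]
  exact congr_arg (iteratedFDeriv ℝ n · x) (funext fun y => hf y z)

/-- The covering map `ℝ^m → ℝ^m / ℤ^m`. -/
def torusMk (x : Space m) : UnitAddTorus (Fin m) := fun i => (x i : UnitAddCircle)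

lemma torusMk_add (x y : Space m) : torusMk (x + y) = torusMk x + torusMk y := rfl

lemma isOpenQuotientMap_torusMk : IsOpenQuotientMap (torusMk (m := m)) :=
  (IsOpenQuotientMap.piMap fun _ => QuotientAddGroup.isOpenQuotientMap_mk).comp
    (PiLp.homeomorph 2 fun _ : Fin m => ℝ).isOpenQuotientMap

lemma exists_eq_add_lattice_of_torusMk_eq {x y : Space m} (h : torusMk x = torusMk y) :
    ∃ z, x = y + lattice z := by
  have hcoord (i) : ∃ z : ℤ, x i = y i + z := by
    obtain ⟨z, hz⟩ := AddCircle.coe_eq_zero_iff (1 : ℝ) |>.1 <|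
      (AddCircle.coe_sub (1 : ℝ) (x i) (y i)).trans (sub_eq_zero.2 (congr_fun h i))
    exact ⟨z, by rw [zsmul_one] at hz; linarith⟩
  choose z hz using hcoord
  exact ⟨z, PiLp.ext hz⟩

lemma mFourier_torusMk (ξ : Freq m) (x : Space m) :
    UnitAddTorus.mFourier ξ (torusMk x) = character ξ x := by
  simp only [UnitAddTorus.mFourier, ContinuousMap.coe_mk, torusMk, fourier_coe_apply, character,
    phase_apply, ← Complex.exp_sum]
  push_cast
  rw [mul_sum, sum_mul]
  exact congr_arg Complex.exp (sum_congr rfl fun i _ => by ring)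

section Lift

variable {α : Type*} {f : Space m → α}

/-- The function on the torus induced by a function on `ℝ^m` (meaningful for lattice-periodic
functions only). -/
noncomputable def torusLift (f : Space m → α) (y : UnitAddTorus (Fin m)) : α :=
  f (Function.surjInv isOpenQuotientMap_torusMk.surjective y)

lemma IsLatticePeriodic.torusLift_torusMk (hf : IsLatticePeriodic f) (x : Space m) :
    torusLift f (torusMk x) = f x := by
  obtain ⟨z, hz⟩ := exists_eq_add_lattice_of_torusMk_eq
    (Function.surjInv_eq isOpenQuotientMap_torusMk.surjective (torusMk x))
  rw [torusLift, hz, hf]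

lemma IsLatticePeriodic.continuous_torusLift [TopologicalSpace α] (hf : IsLatticePeriodic f)
    (hcont : Continuous f) : Continuous (torusLift f) := by
  rw [isOpenQuotientMap_torusMk.isQuotientMap.continuous_iff]
  exact hcont.congr fun x => (hf.torusLift_torusMk x).symm

end Lift

/-! ### Fourier coefficients of periodic functions -/

/-- The normalized Haar measure of the torus. -/
noncomputable def torusHaar (m : ℕ) : MeasureTheory.Measure (UnitAddTorus (Fin m)) :=
  MeasureTheory.Measure.pi fun _ => AddCircle.haarAddCircle

noncomputable instance : MeasureTheory.IsProbabilityMeasure (torusHaar m) := by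
  unfold torusHaar; infer_instance

instance : MeasureTheory.Measure.IsAddRightInvariant (torusHaar m) := by
  unfold torusHaar; infer_instance

/-- The Fourier coefficients of a lattice-periodic function. -/
noncomputable def fourierCoeff (f : Space m → ℂ) : Coeff m :=
  UnitAddTorus.mFourierCoeff (torusLift f)

lemma fourierCoeff_eq_integral (f : Space m → ℂ) (ξ : Freq m) :
    fourierCoeff f ξ = ∫ y, UnitAddTorus.mFourier (-ξ) y * torusLift f y ∂torusHaar m := rfl

lemma norm_mFourier_apply (ξ : Freq m) (y : UnitAddTorus (Fin m)) :
    ‖UnitAddTorus.mFourier ξ y‖ = 1 := by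
  obtain ⟨x, rfl⟩ := isOpenQuotientMap_torusMk.surjective y
  rw [mFourier_torusMk, norm_character]

lemma norm_fourierCoeff_le {f : Space m → ℂ} {C : ℝ} (hC : ∀ x, ‖f x‖ ≤ C) (ξ : Freq m) :
    ‖fourierCoeff f ξ‖ ≤ C := by
  have hle (y) : ‖UnitAddTorus.mFourier (-ξ) y * torusLift f y‖ ≤ C := by
    rw [norm_mul, norm_mFourier_apply, one_mul]
    exact hC _
  rw [fourierCoeff_eq_integral]
  simpa using MeasureTheory.norm_integral_le_of_norm_le_const (μ := torusHaar m)
    (Filter.Eventually.of_forall hle)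

variable {f : Space m → ℂ}

lemma fourierCoeff_comp_add (hf : IsLatticePeriodic f) (w : Space m) (ξ : Freq m) :
    fourierCoeff (fun x => f (x + w)) ξ = character ξ w * fourierCoeff f ξ := by
  rw [fourierCoeff_eq_integral, fourierCoeff_eq_integral,
    ← MeasureTheory.integral_add_right_eq_self (fun y => _ * torusLift f y) (torusMk w),
    ← MeasureTheory.integral_const_mul]
  refine MeasureTheory.integral_congr_ae (Filter.Eventually.of_forall fun y => ?_)
  obtain ⟨x, rfl⟩ := isOpenQuotientMap_torusMk.surjective y
  have hw : character ξ w * character (-ξ) w = 1 := by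
    rw [← character_add_left, add_neg_cancel, character, phase_apply]
    simp
  simp only [← torusMk_add, mFourier_torusMk, hf.torusLift_torusMk,
    (hf.comp_add_right w).torusLift_torusMk, character_add_right]
  linear_combination (-(character (-ξ) x * f (x + w))) * hw

lemma hasDerivAt_fourierCoeff_comp_add (hf : IsLatticePeriodic f) (hf' : ContDiff ℝ 1 f)
    (w : Space m) (ξ : Freq m) :
    HasDerivAt (fun t : ℝ => fourierCoeff (fun x => f (x + t • w)) ξ)
      (fourierCoeff (fun x => fderiv ℝ f x w) ξ) 0 := by
  have hdw : IsLatticePeriodic fun x => fderiv ℝ f x w := fun x z => by simp only [hf.fderiv x z]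
  have hdw_cont : Continuous fun x => fderiv ℝ f x w := by fun_prop
  obtain ⟨C, hC⟩ := hdw.exists_forall_norm_le hdw_cont
  have hmul {g : Space m → ℂ} (hg : IsLatticePeriodic g) (hg' : Continuous g) :
      Continuous fun y => UnitAddTorus.mFourier (-ξ) y * torusLift g y :=
    (UnitAddTorus.mFourier (-ξ)).continuous.mul (hg.continuous_torusLift hg')
  have hline (x : Space m) (t : ℝ) :
      HasDerivAt (fun t : ℝ => f (x + t • w)) (fderiv ℝ f (x + t • w) w) t := by
    have hw : HasDerivAt (fun t : ℝ => x + t • w) w t := by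
      simpa using ((hasDerivAt_id t).smul_const w).const_add x
    exact ((hf'.differentiable one_ne_zero _).hasFDerivAt).comp_hasDerivAt t hw
  have key := (hasDerivAt_integral_of_dominated_loc_of_deriv_le (μ := torusHaar m) (x₀ := (0 : ℝ))
    (F := fun t y => UnitAddTorus.mFourier (-ξ) y * torusLift (fun x => f (x + t • w)) y)
    (F' := fun t y =>
      UnitAddTorus.mFourier (-ξ) y * torusLift (fun x => fderiv ℝ f (x + t • w) w) y)
    (bound := fun _ => C) Filter.univ_mem
    (.of_forall fun t => (hmul (hf.comp_add_right _) (by fun_prop)).aestronglyMeasurable)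
    ((hmul (hf.comp_add_right _) (by fun_prop)).integrable_of_hasCompactSupport
      (HasCompactSupport.of_compactSpace _))
    (hmul (hdw.comp_add_right _) (by fun_prop)).aestronglyMeasurable
    (.of_forall fun y t _ => ?_) (MeasureTheory.integrable_const C)
    (.of_forall fun y t _ => (hline _ t).const_mul _)).2
  · simp only [fourierCoeff_eq_integral]
    simpa only [zero_smul, add_zero] using key
  · rw [norm_mul, norm_mFourier_apply, one_mul]
    exact hC _

lemma fourierCoeff_fderiv (hf : IsLatticePeriodic f) (hf' : ContDiff ℝ 1 f) (w : Space m)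
    (ξ : Freq m) :
    fourierCoeff (fun x => fderiv ℝ f x w) ξ = phase ξ w * fourierCoeff f ξ := by
  have hshift : HasDerivAt (fun t : ℝ => fourierCoeff (fun x => f (x + t • w)) ξ)
      (phase ξ w * fourierCoeff f ξ) 0 := by
    have hline : HasDerivAt (fun t : ℝ => phase ξ (t • w)) (phase ξ w) 0 := by
      simpa only [map_smul, one_smul] using (hasDerivAt_id' (0 : ℝ)).smul_const (phase ξ w)
    have hexp := hline.cexp.mul_const (fourierCoeff f ξ)
    rw [zero_smul, map_zero, Complex.exp_zero, one_mul] at hexp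
    exact hexp.congr_of_eventuallyEq (.of_forall fun t => fourierCoeff_comp_add hf _ ξ)
  exact (hasDerivAt_fourierCoeff_comp_add hf hf' w ξ).unique hshift

lemma fourierCoeff_iteratedFDeriv (hf : IsLatticePeriodic f) {n : ℕ} (hf' : ContDiff ℝ n f)
    (w : Space m) (ξ : Freq m) :
    fourierCoeff (fun x => iteratedFDeriv ℝ n f x fun _ => w) ξ =
      phase ξ w ^ n * fourierCoeff f ξ := by
  induction n with
  | zero => simp
  | succ n ih =>
    have hsmooth : ContDiff ℝ 1 (iteratedFDeriv ℝ n f) :=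
      hf'.iteratedFDeriv_right (by rw [add_comm]; norm_cast)
    have hderiv (x : Space m) : iteratedFDeriv ℝ (n + 1) f x (fun _ => w) =
        fderiv ℝ (fun x => iteratedFDeriv ℝ n f x fun _ => w) x w :=
      (iteratedFDeriv_succ_apply_left _).trans
        (fderiv_continuousMultilinear_apply_const_apply
          (hsmooth.differentiable one_ne_zero x) _ w).symm
    have hper : IsLatticePeriodic fun x => iteratedFDeriv ℝ n f x fun _ => w := fun x z => by
      simp only [hf.iteratedFDeriv n x z]
    have happly : ContDiff ℝ 1 fun x => iteratedFDeriv ℝ n f x fun _ => w :=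
      (ContinuousMultilinearMap.apply ℝ (fun _ : Fin n => Space m) ℂ fun _ => w).contDiff.comp
        hsmooth
    simp only [hderiv]
    rw [fourierCoeff_fderiv hper happly, ih (hf'.of_le (by norm_cast; lia)), pow_succ', mul_assoc]

/-! ### Exponential decay of the Fourier coefficients of analytic functions -/

lemma exists_phase_eq_freqSize (ξ : Freq m) :
    ∃ w : Space m, ‖w‖ ≤ m ∧ phase ξ w = ((2 * Real.pi * freqSize ξ : ℝ) : ℂ) * Complex.I := by
  refine ⟨WithLp.toLp 2 fun j => (SignType.sign (ξ j : ℝ) : ℝ), ?_, ?_⟩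
  · have hsign (t : ℝ) : ‖(SignType.sign t : ℝ)‖ ^ 2 ≤ 1 := by
      rcases SignType.sign t <;> simp
    rw [EuclideanSpace.norm_eq, Real.sqrt_le_left m.cast_nonneg]
    calc ∑ j, ‖(SignType.sign (ξ j : ℝ) : ℝ)‖ ^ 2 ≤ ∑ _j : Fin m, (1 : ℝ) := by
          gcongr
          exact hsign _
      _ = m := by simp
      _ ≤ (m : ℝ) ^ 2 := mod_cast Nat.le_self_pow two_ne_zero m
  · simp only [phase_apply, freqSize, self_mul_sign]

lemma mul_exp_le_of_forall_pow_mul_le {a C r L : ℝ} (hr : 0 < r)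
    (h : ∀ n : ℕ, L ^ n * a ≤ C * n.factorial * r⁻¹ ^ n) :
    a * Real.exp (r / 2 * L) ≤ 2 * C := by
  have hexp : HasSum (fun n : ℕ => a * ((r / 2 * L) ^ n / n.factorial))
      (a * Real.exp (r / 2 * L)) := by
    rw [Real.exp_eq_exp_ℝ]
    exact (NormedSpace.expSeries_div_hasSum_exp _).mul_left a
  have hgeom : HasSum (fun n : ℕ => C * (1 / 2) ^ n) (2 * C) :=
    mul_comm C 2 ▸ hasSum_geometric_two.mul_left C
  refine hasSum_le (fun n => ?_) hexp hgeom
  calc a * ((r / 2 * L) ^ n / n.factorial) = (r / 2) ^ n / n.factorial * (L ^ n * a) := by ring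
    _ ≤ (r / 2) ^ n / n.factorial * (C * n.factorial * r⁻¹ ^ n) :=
      mul_le_mul_of_nonneg_left (h n) (by positivity)
    _ = C * (1 / 2) ^ n := by
      have hr' : r / 2 * r⁻¹ = 1 / 2 := by field_simp
      rw [← hr', mul_pow]
      field_simp

lemma exists_norm_fourierCoeff_le_exp {f : Space m → ℂ} (hf : ∀ x, AnalyticAt ℝ f x)
    (hper : IsLatticePeriodic f) :
    ∃ C s : ℝ, 0 < s ∧ ∀ ξ, ‖fourierCoeff f ξ‖ ≤ C * Real.exp (-(s * freqSize ξ)) := by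
  obtain ⟨C, ρ, hC, hρ, hcauchy⟩ := exists_cauchyEstimateOn_of_isCompact hf isCompact_unitCube
  set r := ρ / (m + 1)
  have hr : 0 < r := by positivity
  refine ⟨2 * C, r * Real.pi, by positivity, fun ξ => ?_⟩
  obtain ⟨w, hw, hphase⟩ := exists_phase_eq_freqSize ξ
  have hsmooth (n : ℕ) : ContDiff ℝ n f := contDiff_iff_contDiffAt.2 fun x => (hf x).contDiffAt
  have hbound (n : ℕ) (x : Space m) :
      ‖iteratedFDeriv ℝ n f x fun _ => w‖ ≤ C * n.factorial * r⁻¹ ^ n := by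
    obtain ⟨z, hz⟩ := exists_add_lattice_mem_unitCube x
    rw [← hper.iteratedFDeriv n x z]
    refine (hcauchy _ hz n w).trans ?_
    have : ‖w‖ / ρ ≤ r⁻¹ := by
      rw [inv_div]
      gcongr
      linarith
    gcongr
  have hdecay := mul_exp_le_of_forall_pow_mul_le (a := ‖fourierCoeff f ξ‖) (C := C) hr
    (L := 2 * Real.pi * freqSize ξ) fun n => by
      have hn := norm_fourierCoeff_le (hbound n) ξ
      rwa [fourierCoeff_iteratedFDeriv hper (hsmooth n), hphase, norm_mul, norm_pow, norm_mul,
        Complex.norm_I, mul_one, Complex.norm_of_nonneg] at hn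
      exact mul_nonneg (by positivity) (freqSize_nonneg ξ)
  have hrate : r / 2 * (2 * Real.pi * freqSize ξ) = r * Real.pi * freqSize ξ := by ring
  rwa [Real.exp_neg, ← div_eq_mul_inv, le_div_iff₀ (Real.exp_pos _), ← hrate]

lemma tsum_pi_prod_ne_top {ι : Type*} {g : ι → ℝ≥0∞} (hg : ∑' k, g k ≠ ∞) (d : ℕ) :
    ∑' ξ : Fin d → ι, ∏ j, g (ξ j) ≠ ∞ := by
  induction d with
  | zero => simp
  | succ d ih =>
    rw [← (Fin.consEquiv fun _ : Fin (d + 1) => ι).tsum_eq, ENNReal.tsum_prod']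
    simp only [Fin.consEquiv_apply, Fin.prod_univ_succ, Fin.cons_zero, Fin.cons_succ,
      ENNReal.tsum_mul_left, ENNReal.tsum_mul_right]
    exact ENNReal.mul_ne_top hg ih

lemma tsum_exp_neg_freqSize_ne_top {s : ℝ} (hs : 0 < s) :
    ∑' ξ : Freq m, ENNReal.ofReal (Real.exp (-(s * freqSize ξ))) ≠ ∞ := by
  have hnat : Summable fun k : ℕ => Real.exp (-(s * k)) :=
    (Real.summable_exp_nat_mul_iff.2 (neg_lt_zero.2 hs)).congr fun k => by ring_nf
  have hsum : Summable fun k : ℤ => Real.exp (-(s * |(k : ℝ)|)) :=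
    .of_nat_of_neg (by simpa using hnat) (by simpa using hnat)
  convert tsum_pi_prod_ne_top hsum.tsum_ofReal_ne_top m using 3 with ξ
  rw [← ENNReal.ofReal_prod_of_nonneg fun _ _ => (Real.exp_pos _).le, ← Real.exp_sum,
    sum_neg_distrib, ← mul_sum, freqSize]

lemma coeffNorm_ne_top_of_norm_le_exp {a : Coeff m} {C s : ℝ} (hs : 0 < s)
    (ha : ∀ ξ, ‖a ξ‖ ≤ C * Real.exp (-(s * freqSize ξ))) : coeffNorm (s / 2) a ≠ ∞ := by
  refine ne_top_of_le_ne_top (ENNReal.mul_ne_top (ENNReal.ofReal_ne_top (r := C))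
    (tsum_exp_neg_freqSize_ne_top (m := m) (half_pos hs))) ?_
  rw [coeffNorm, ← ENNReal.tsum_mul_left]
  refine ENNReal.tsum_le_tsum fun ξ => ?_
  rw [expWeight, ← ofReal_norm, ← ENNReal.ofReal_mul (norm_nonneg _),
    ← ENNReal.ofReal_mul' (Real.exp_pos _).le]
  refine ENNReal.ofReal_le_ofReal ?_
  calc ‖a ξ‖ * Real.exp (s / 2 * freqSize ξ)
      ≤ C * Real.exp (-(s * freqSize ξ)) * Real.exp (s / 2 * freqSize ξ) := by gcongr; exact ha ξ
    _ = C * Real.exp (-(s / 2 * freqSize ξ)) := by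
      rw [mul_assoc, ← Real.exp_add]
      ring_nf

lemma isHermitianSymm_fourierCoeff (f : Space m → ℝ) :
    IsHermitianSymm (fourierCoeff fun x => (f x : ℂ)) := fun ξ => by
  rw [fourierCoeff_eq_integral, fourierCoeff_eq_integral, ← integral_conj]
  refine MeasureTheory.integral_congr_ae (Filter.Eventually.of_forall fun y => ?_)
  simp only [map_mul, torusLift, Complex.conj_ofReal, ← UnitAddTorus.mFourier_neg]

lemma fourierEval_fourierCoeff {f : Space m → ℂ} (hf : Continuous f) (hper : IsLatticePeriodic f)
    (hsum : Summable (fourierCoeff f)) (x : Space m) : fourierEval (fourierCoeff f) x = f x := by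
  have hseries := UnitAddTorus.hasSum_mFourier_series_apply_of_summable
    (f := ⟨torusLift f, hper.continuous_torusLift hf⟩) hsum (torusMk x)
  simp only [mFourier_torusMk] at hseries
  exact hseries.tsum_eq.trans (hper.torusLift_torusMk x)

theorem exists_fourierEval_eq {f : Space m → ℝ} (hf : ∀ x, AnalyticAt ℝ f x)
    (hper : IsLatticePeriodic f) :
    ∃ s > 0, ∃ a : Coeff m, coeffNorm s a ≠ ∞ ∧ IsHermitianSymm a ∧
      ∀ x, fourierEval a x = f x := by
  have hf_complex (x : Space m) : AnalyticAt ℝ (fun x => (f x : ℂ)) x :=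
    (Complex.ofRealCLM.analyticAt _).comp (hf x)
  have hper_complex : IsLatticePeriodic fun x => (f x : ℂ) := fun x z => by simp only [hper x z]
  obtain ⟨C, s, hs, hdecay⟩ := exists_norm_fourierCoeff_le_exp hf_complex hper_complex
  have hnorm := coeffNorm_ne_top_of_norm_le_exp hs hdecay
  exact ⟨s / 2, half_pos hs, _, hnorm, isHermitianSymm_fourierCoeff f,
    fourierEval_fourierCoeff (continuous_iff_continuousAt.2 fun x => (hf_complex x).continuousAt)
      hper_complex (summable_norm_of_coeffNorm_ne_top (half_pos hs).le hnorm).of_norm⟩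

/-! ### Existence -/

section Existence

variable {ε : ℝ} {p : ℝ × Space m}

lemma map_zero_prodMk (L : ℝ × Space m →L[ℝ] ℝ) (w : Space m) :
    L (0, w) = ∑ i, w i * L (0, EuclideanSpace.single i 1) := by
  have hw : w = ∑ i, w i • EuclideanSpace.single i (1 : ℝ) := by
    simpa using ((EuclideanSpace.basisFun (Fin m) ℝ).sum_repr w).symm
  have hL := map_sum (L ∘L ContinuousLinearMap.inr ℝ ℝ (Space m))
    (fun i => w i • EuclideanSpace.single i (1 : ℝ)) univ
  rw [← hw] at hL
  simpa using hL

lemma eventually_abs_fst_lt (hp : |p.1| < ε) : ∀ᶠ q : ℝ × Space m in nhds p, |q.1| < ε :=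
  (continuous_fst.abs.tendsto p).eventually (gt_mem_nhds hp)

lemma IsAnalyticSeries.fderiv_realEval_mul {A B : TimeSeries m} (hA : IsAnalyticSeries ε A)
    (hB : IsAnalyticSeries ε B) (hp : |p.1| < ε) (j : Fin m) :
    fderiv ℝ (fun q => realEval A q * realEval B q) p (0, EuclideanSpace.single j 1) =
      realEval (applySymbol (derivSymbol j) (seriesMul A B)) p := by
  have hmul : realEval (seriesMul A B) =ᶠ[nhds p] fun q => realEval A q * realEval B q :=
    (eventually_abs_fst_lt hp).mono fun q hq => hA.realEval_seriesMul hB hq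
  rw [← hmul.fderiv_eq, (hA.seriesMul hB).fderiv_realEval_single hp]

lemma IsAnalyticSeries.fderiv_fderiv_realEval {A : TimeSeries m} (hA : IsAnalyticSeries ε A)
    (hp : |p.1| < ε) (j : Fin m) :
    fderiv ℝ (fun q => fderiv ℝ (realEval A) q (0, EuclideanSpace.single j 1)) p
        (0, EuclideanSpace.single j 1) =
      realEval (applySymbol (derivSymbol j) (applySymbol (derivSymbol j) A)) p := by
  have hderiv : (fun q => fderiv ℝ (realEval A) q (0, EuclideanSpace.single j 1)) =ᶠ[nhds p]
      realEval (applySymbol (derivSymbol j) A) :=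
    (eventually_abs_fst_lt hp).mono fun q hq => hA.fderiv_realEval_single hq j
  rw [hderiv.fderiv_eq, (hA.derivSymbol j).fderiv_realEval_single hp]

variable {A : Option (Fin m) → TimeSeries m}

lemma continuity_equation_realEval (hA : ∀ c, IsAnalyticSeries ε (A c))
    (hrhs : timeDeriv (A none) = rhs A none) (hp : |p.1| < ε) :
    fderiv ℝ (realEval (A none)) p (1, 0) + ∑ i, fderiv ℝ
      (fun q => realEval (A none) q * realEval (A (some i)) q) p (0, EuclideanSpace.single i 1) =
      0 := by
  rw [(hA none).fderiv_realEval_time hp, hrhs, rhs, realEval_neg,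
    IsAnalyticSeries.realEval_sum (fun i => ((hA none).seriesMul (hA (some i))).derivSymbol i) hp]
  simp only [(hA none).fderiv_realEval_mul (hA (some _)) hp]
  exact neg_add_cancel _

lemma momentum_equation_realEval (hA : ∀ c, IsAnalyticSeries ε (A c)) {j : Fin m}
    (hrhs : timeDeriv (A (some j)) = rhs A (some j)) (hp : |p.1| < ε) :
    fderiv ℝ (realEval (A (some j))) p (1, 0) +
      fderiv ℝ (realEval (A (some j))) p (0, WithLp.toLp 2 fun i => realEval (A (some i)) p) +
      fderiv ℝ (realEval (applySymbol helmholtzInvSymbol (A none))) p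
        (0, EuclideanSpace.single j 1) = 0 := by
  have htransport (i) :
      IsAnalyticSeries ε (seriesMul (A (some i)) (applySymbol (derivSymbol i) (A (some j)))) :=
    (hA (some i)).seriesMul ((hA (some j)).derivSymbol i)
  rw [(hA (some j)).fderiv_realEval_time hp, hrhs, rhs, realEval_neg, map_zero_prodMk,
    (hA none).helmholtzInvSymbol.fderiv_realEval_single hp,
    (IsAnalyticSeries.sum fun i _ => htransport i).realEval_add
      ((hA none).helmholtzInvSymbol.derivSymbol j) hp,
    IsAnalyticSeries.realEval_sum htransport hp]
  simp only [(hA (some j)).fderiv_realEval_single hp,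
    (hA (some _)).realEval_seriesMul ((hA (some j)).derivSymbol _) hp]
  ring

lemma elliptic_equation_realEval {A : TimeSeries m} (hA : IsAnalyticSeries ε A)
    (hp : |p.1| < ε) :
    (∑ i, fderiv ℝ (fun q => fderiv ℝ (realEval (applySymbol helmholtzInvSymbol A)) q
        (0, EuclideanSpace.single i 1)) p (0, EuclideanSpace.single i 1)) -
      realEval (applySymbol helmholtzInvSymbol A) p + realEval A p = 0 := by
  set Φ := applySymbol helmholtzInvSymbol A
  have hΦ : IsAnalyticSeries ε Φ := hA.helmholtzInvSymbol
  have hΔ (i) : IsAnalyticSeries ε (applySymbol (derivSymbol i) (applySymbol (derivSymbol i) Φ)) :=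
    (hΦ.derivSymbol i).derivSymbol i
  have hsymbol : ∑ i, applySymbol (derivSymbol i) (applySymbol (derivSymbol i) Φ) + -Φ + A = 0 := by
    funext k
    have := congr_arg (· * A k) (laplacian_symbol_mul_helmholtzInvSymbol (m := m))
    simpa [Φ, applySymbol, add_mul, sub_mul, sum_mul, mul_assoc, sub_eq_add_neg] using this
  have heval := congr_arg (realEval · p) hsymbol
  simp only [realEval_zero, realEval_neg,
    ((IsAnalyticSeries.sum fun i _ => hΔ i).add hΦ.neg).realEval_add hA hp,
    (IsAnalyticSeries.sum fun i _ => hΔ i).realEval_add hΦ.neg hp,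
    IsAnalyticSeries.realEval_sum hΔ hp] at heval
  simpa only [hΦ.fderiv_fderiv_realEval hp, sub_eq_add_neg] using heval

lemma isAnalyticMEPSolution_realEval {n₀ : Space m → ℝ} {v₀ : Space m → Space m}
    (hA : ∀ c, IsAnalyticSeries ε (A c)) (hrhs : ∀ c, timeDeriv (A c) = rhs A c)
    (hn₀ : ∀ x, realEval (A none) (0, x) = n₀ x)
    (hv₀ : ∀ x j, realEval (A (some j)) (0, x) = v₀ x j) :
    IsAnalyticMEPSolution m ε n₀ v₀ (realEval (A none))
      (realEval (applySymbol helmholtzInvSymbol (A none)))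
      (fun p => WithLp.toLp 2 fun j => realEval (A (some j)) p) := by
  refine ⟨fun p hp => ?_, fun t x z => ?_, fun p hp => ?_, fun p hp j => ?_, fun p hp => ?_,
    fun x => ⟨hn₀ x, PiLp.ext (hv₀ x)⟩⟩
  · have hv : AnalyticAt ℝ (fun q (j : Fin m) => realEval (A (some j)) q) p :=
      analyticAt_pi_iff.2 fun j => (hA (some j)).analyticAt_realEval (abs_lt.2 hp)
    exact ⟨(hA none).analyticAt_realEval (abs_lt.2 hp),
      ((PiLp.continuousLinearEquiv 2 ℝ fun _ : Fin m => ℝ).symm.analyticAt _).comp hv,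
      (hA none).helmholtzInvSymbol.analyticAt_realEval (abs_lt.2 hp)⟩
  · simp only [realEval_add_lattice, and_self]
  · exact continuity_equation_realEval hA (hrhs none) (abs_lt.2 hp)
  · exact momentum_equation_realEval hA (hrhs (some j)) (abs_lt.2 hp)
  · exact elliptic_equation_realEval (hA none) (abs_lt.2 hp)

/-- The density (`none`) and the components of the velocity (`some j`). -/
def stateComponent (n₀ : Space m → ℝ) (v₀ : Space m → Space m) : Option (Fin m) → Space m → ℝ
  | none => n₀
  | some j => fun x => v₀ x j

theorem exists_isAnalyticMEPSolution {n₀ : Space m → ℝ} {v₀ : Space m → Space m}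
    (hn₀ : ∀ x, AnalyticAt ℝ n₀ x) (hv₀ : ∀ x, AnalyticAt ℝ v₀ x)
    (hn₀p : IsLatticePeriodic n₀) (hv₀p : IsLatticePeriodic v₀) :
    ∃ ε > 0, ∃ n φ v, IsAnalyticMEPSolution m ε n₀ v₀ n φ v := by
  have han : ∀ c x, AnalyticAt ℝ (stateComponent n₀ v₀ c) x
    | none => hn₀
    | some j => fun x => (EuclideanSpace.proj j : Space m →L[ℝ] ℝ).analyticAt _ |>.comp (hv₀ x)
  have hper : ∀ c, IsLatticePeriodic (stateComponent n₀ v₀ c)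
    | none => hn₀p
    | some j => fun x z => congr_arg (fun w : Space m => w j) (hv₀p x z)
  choose s hs u₀ hu₀ hsymm heval using fun c => exists_fourierEval_eq (han c) (hper c)
  have hs_min : 0 < univ.inf' univ_nonempty s := (lt_inf'_iff _).2 fun c _ => hs c
  obtain ⟨ε, hε, hA⟩ := exists_isAnalyticSeries_solutionSeries hs_min
    (fun c => ne_top_of_le_ne_top (hu₀ c) (coeffNorm_mono (inf'_le s (mem_univ c)) _)) hsymm
  have hinit (c x) : realEval (solutionSeries u₀ c) (0, x) = stateComponent n₀ v₀ c x := by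
    rw [realEval, seriesEval_zero_time, solutionSeries_zero, heval, Complex.ofReal_re]
  exact ⟨ε, hε, _, _, _, isAnalyticMEPSolution_realEval hA timeDeriv_solutionSeries (hinit none)
    fun x j => hinit (some j) x⟩

end Existence

/-! ### Directional derivatives -/

section DirectionalDerivative

variable {E : Type*} [NormedAddCommGroup E] [NormedSpace ℝ E] {f g : E → ℝ} {p : E} {U : Set E}

/-- The derivative of `f` in the direction `w`, as an operator on functions. -/
noncomputable def dirDeriv (w : E) (f : E → ℝ) : E → ℝ := fun p => fderiv ℝ f p w

lemma analyticOnNhd_dirDeriv (hf : AnalyticOnNhd ℝ f U) (w : E) :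
    AnalyticOnNhd ℝ (dirDeriv w f) U := fun p hp =>
  ((ContinuousLinearMap.apply ℝ ℝ w).analyticAt _).comp (hf p hp).fderiv

lemma eqOn_dirDeriv (hU : IsOpen U) (h : Set.EqOn f g U) (w : E) :
    Set.EqOn (dirDeriv w f) (dirDeriv w g) U := fun p hp => by
  rw [dirDeriv, dirDeriv, (h.eventuallyEq_of_mem (hU.mem_nhds hp)).fderiv_eq]

lemma dirDeriv_sub (hf : DifferentiableAt ℝ f p) (hg : DifferentiableAt ℝ g p) (w : E) :
    dirDeriv w (f - g) p = dirDeriv w f p - dirDeriv w g p := by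
  rw [dirDeriv, fderiv_sub hf hg, sub_apply, dirDeriv, dirDeriv]

lemma dirDeriv_neg (f : E → ℝ) (w : E) : dirDeriv w (-f) = -dirDeriv w f := by
  funext p
  rw [dirDeriv, fderiv_neg, neg_apply, Pi.neg_apply, dirDeriv]

lemma dirDeriv_sum {ι : Type*} {s : Finset ι} {f : ι → E → ℝ}
    (hf : ∀ i ∈ s, DifferentiableAt ℝ (f i) p) (w : E) :
    dirDeriv w (∑ i ∈ s, f i) p = ∑ i ∈ s, dirDeriv w (f i) p := by
  simp only [dirDeriv, fderiv_sum hf, _root_.sum_apply]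

lemma dirDeriv_dirDeriv (hf : DifferentiableAt ℝ (fderiv ℝ f) p) (w w' : E) :
    dirDeriv w (dirDeriv w' f) p = fderiv ℝ (fderiv ℝ f) p w w' :=
  congr_arg (· w) ((ContinuousLinearMap.apply ℝ ℝ w').hasFDerivAt.comp p hf.hasFDerivAt).fderiv

lemma dirDeriv_comm (hf : AnalyticAt ℝ f p) (w w' : E) :
    dirDeriv w (dirDeriv w' f) p = dirDeriv w' (dirDeriv w f) p := by
  rw [dirDeriv_dirDeriv hf.fderiv.differentiableAt, dirDeriv_dirDeriv hf.fderiv.differentiableAt]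
  exact hf.contDiffAt.isSymmSndFDerivAt_of_omega w w'

lemma dirDeriv_comp_add_right (f : E → ℝ) (w a : E) :
    dirDeriv w (fun p => f (p + a)) = fun p => dirDeriv w f (p + a) := by
  funext p
  rw [dirDeriv, fderiv_comp_add_right, dirDeriv]

lemma hasDerivAt_comp_line (hf : Differentiable ℝ f) (p w : E) (s : ℝ) :
    HasDerivAt (fun s : ℝ => f (p + s • w)) (dirDeriv w f (p + s • w)) s := by
  have hline : HasDerivAt (fun s : ℝ => p + s • w) w s := by
    simpa using ((hasDerivAt_id s).smul_const w).const_add p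
  exact (hf _).hasFDerivAt.comp_hasDerivAt s hline

end DirectionalDerivative

/-! ### The maximum principle for `Δ - 1` on the torus -/

-- A positive second derivative makes `0` a local minimum as well, hence `g` locally constant.
lemma deriv_deriv_nonpos_of_isLocalMax {g : ℝ → ℝ} {x : ℝ} (hmax : IsLocalMax g x)
    (hg : ContinuousAt g x) : deriv (deriv g) x ≤ 0 := by
  by_contra! hpos
  have hmin : IsLocalMin g x := isLocalMin_of_deriv_deriv_pos hpos hmax.deriv_eq_zero hg
  have hconst : g =ᶠ[nhds x] fun _ => g x := by
    filter_upwards [hmax, hmin] with y hy hy' using le_antisymm hy hy'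
  have hzero : deriv (deriv g) x = 0 := by
    rw [hconst.deriv.deriv_eq]
    simp only [deriv_const', deriv_const]
  exact hpos.ne' hzero

lemma dirDeriv_dirDeriv_nonpos_of_forall_le {E : Type*} [NormedAddCommGroup E] [NormedSpace ℝ E]
    {f : E → ℝ} {y : E} (hf : ContDiff ℝ 2 f) (hmax : ∀ x, f x ≤ f y) (w : E) :
    dirDeriv w (dirDeriv w f) y ≤ 0 := by
  have hf₁ : Differentiable ℝ f := hf.differentiable two_ne_zero
  have hf₂ : Differentiable ℝ (dirDeriv w f) :=
    ((hf.fderiv_right (m := 1) le_rfl).clm_apply contDiff_const).differentiable one_ne_zero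
  have hderiv : deriv (fun s : ℝ => f (y + s • w)) = fun s => dirDeriv w f (y + s • w) :=
    funext fun s => (hasDerivAt_comp_line hf₁ y w s).deriv
  have hline_max : IsLocalMax (fun s : ℝ => f (y + s • w)) 0 :=
    .of_forall fun s => by simpa using hmax (y + s • w)
  have := deriv_deriv_nonpos_of_isLocalMax hline_max
    (hasDerivAt_comp_line hf₁ y w 0).continuousAt
  rwa [hderiv, (hasDerivAt_comp_line hf₂ y w 0).deriv, zero_smul, add_zero] at this

lemma IsLatticePeriodic.exists_forall_le {u : Space m → ℝ} (hper : IsLatticePeriodic u)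
    (hu : Continuous u) : ∃ y, ∀ x, u x ≤ u y := by
  obtain ⟨z, hz⟩ := exists_add_lattice_mem_unitCube (0 : Space m)
  obtain ⟨y, -, hy⟩ := isCompact_unitCube.exists_isMaxOn ⟨_, hz⟩ hu.continuousOn
  refine ⟨y, fun x => ?_⟩
  obtain ⟨z, hz⟩ := exists_add_lattice_mem_unitCube x
  exact hper x z ▸ hy hz

lemma nonpos_of_sum_dirDeriv_dirDeriv_eq {u : Space m → ℝ} (hu : ContDiff ℝ 2 u)
    (hper : IsLatticePeriodic u) {ι : Type*} {s : Finset ι} {e : ι → Space m}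
    (h : ∀ x, ∑ i ∈ s, dirDeriv (e i) (dirDeriv (e i) u) x = u x) (x : Space m) : u x ≤ 0 := by
  obtain ⟨y, hy⟩ := hper.exists_forall_le hu.continuous
  calc u x ≤ u y := hy x
    _ = ∑ i ∈ s, dirDeriv (e i) (dirDeriv (e i) u) y := (h y).symm
    _ ≤ 0 := sum_nonpos fun i _ => dirDeriv_dirDeriv_nonpos_of_forall_le hu hy (e i)

lemma eq_zero_of_sum_dirDeriv_dirDeriv_eq {u : Space m → ℝ} (hu : ContDiff ℝ 2 u)
    (hper : IsLatticePeriodic u) {ι : Type*} {s : Finset ι} {e : ι → Space m}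
    (h : ∀ x, ∑ i ∈ s, dirDeriv (e i) (dirDeriv (e i) u) x = u x) (x : Space m) : u x = 0 := by
  refine le_antisymm (nonpos_of_sum_dirDeriv_dirDeriv_eq hu hper h x) (neg_nonpos.1 ?_)
  refine nonpos_of_sum_dirDeriv_dirDeriv_eq (u := -u) (s := s) (e := e) hu.neg
    (fun x z => congr_arg Neg.neg (hper x z)) (fun x => ?_) x
  simp only [dirDeriv_neg, Pi.neg_apply, sum_neg_distrib, h]

/-! ### Uniqueness -/

section Uniqueness

variable {ε t : ℝ} {k : ℕ} {x : Space m} {f f' g g' : ℝ × Space m → ℝ}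

/-- The space-time domain `(-ε, ε) × ℝ^m`. -/
def slab (m : ℕ) (ε : ℝ) : Set (ℝ × Space m) := {p | p.1 ∈ Set.Ioo (-ε) ε}

lemma isOpen_slab : IsOpen (slab m ε) := isOpen_Ioo.preimage continuous_fst

lemma zero_mk_mem_slab (hε : 0 < ε) (x : Space m) : (0, x) ∈ slab m ε :=
  ⟨neg_lt_zero.2 hε, hε⟩

/-- The direction of `∂ₜ`. -/
def timeDir : ℝ × Space m := (1, 0)

/-- The direction of `∂ᵢ`. -/
noncomputable def spaceDir (i : Fin m) : ℝ × Space m := (0, EuclideanSpace.single i 1)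

lemma hasDerivAt_timeSlice (hf : DifferentiableAt ℝ f (t, x)) :
    HasDerivAt (fun s => f (s, x)) (dirDeriv timeDir f (t, x)) t :=
  hf.hasFDerivAt.comp_hasDerivAt t ((hasDerivAt_id t).prodMk (hasDerivAt_const t x))

lemma dirDeriv_spaceSlice (hf : DifferentiableAt ℝ f (t, x)) (w : Space m) :
    dirDeriv w (fun y => f (t, y)) x = dirDeriv (0, w) f (t, x) :=
  congr_arg (· w) (hf.hasFDerivAt.comp x (hasFDerivAt_prodMk_right t x)).fderiv

lemma analyticAt_timeSlice (hf : AnalyticAt ℝ f (t, x)) : AnalyticAt ℝ (fun s => f (s, x)) t :=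
  hf.comp (f := fun s : ℝ => (s, x)) (analyticAt_id.prod analyticAt_const)

/-- `f - g = O(t ^ k)` as `t → 0`, pointwise in `x`. The order is only meaningful for functions
analytic near `t = 0`. -/
def AgreeToOrder (k : ℕ) (f g : ℝ × Space m → ℝ) : Prop :=
  ∀ x, (k : ℕ∞) ≤ analyticOrderAt (fun t => f (t, x) - g (t, x)) 0

lemma agreeToOrder_zero (f g : ℝ × Space m → ℝ) : AgreeToOrder 0 f g := fun _ => zero_le

lemma agreeToOrder_succ_iff (hε : 0 < ε) (hf : AnalyticOnNhd ℝ f (slab m ε))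
    (hg : AnalyticOnNhd ℝ g (slab m ε)) :
    AgreeToOrder (k + 1) f g ↔
      (∀ x, f (0, x) = g (0, x)) ∧ AgreeToOrder k (dirDeriv timeDir f) (dirDeriv timeDir g) := by
  rw [AgreeToOrder, AgreeToOrder, ← forall_and]
  refine forall_congr' fun x => ?_
  set u : ℝ → ℝ := fun t => f (t, x) - g (t, x)
  have hu : AnalyticAt ℝ u 0 := (analyticAt_timeSlice (hf _ (zero_mk_mem_slab hε x))).sub
    (analyticAt_timeSlice (hg _ (zero_mk_mem_slab hε x)))
  have hderiv : deriv u =ᶠ[nhds 0]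
      fun t => dirDeriv timeDir f (t, x) - dirDeriv timeDir g (t, x) := by
    filter_upwards [Ioo_mem_nhds (neg_lt_zero.2 hε) hε] with t ht
    exact ((hasDerivAt_timeSlice (hf (t, x) ht).differentiableAt).sub
      (hasDerivAt_timeSlice (hg (t, x) ht).differentiableAt)).deriv
  rw [← analyticOrderAt_congr hderiv, Nat.cast_add_one]
  refine ⟨fun h => ?_, fun h => (analyticOrderAt_deriv_ge_iff hu (sub_eq_zero.2 h.1)).1 h.2⟩
  have hu_zero : u 0 = 0 := apply_eq_zero_of_analyticOrderAt_ne_zero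
    (ne_bot_of_le_ne_bot (by simp) h)
  exact ⟨sub_eq_zero.1 hu_zero, (analyticOrderAt_deriv_ge_iff hu hu_zero).2 h⟩

namespace AgreeToOrder

lemma congr (hε : 0 < ε) (h : AgreeToOrder k f g) (hf : Set.EqOn f f' (slab m ε))
    (hg : Set.EqOn g g' (slab m ε)) : AgreeToOrder k f' g' := fun x => by
  refine (h x).trans_eq (analyticOrderAt_congr ?_)
  filter_upwards [Ioo_mem_nhds (neg_lt_zero.2 hε) hε] with t ht
  rw [hf (show (t, x) ∈ slab m ε from ht), hg (show (t, x) ∈ slab m ε from ht)]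

protected lemma add (hf : AgreeToOrder k f f') (hg : AgreeToOrder k g g') :
    AgreeToOrder k (f + g) (f' + g') := fun x => by
  refine (le_min (hf x) (hg x)).trans (le_analyticOrderAt_add.trans_eq (congr_arg₂ _ ?_ rfl))
  funext t
  simp only [Pi.add_apply]
  ring

protected lemma neg (h : AgreeToOrder k f g) : AgreeToOrder k (-f) (-g) := fun x => by
  have hsub : (fun t => (-f) (t, x) - (-g) (t, x)) = -fun t => f (t, x) - g (t, x) := by
    funext t
    simp only [Pi.neg_apply]
    ring
  rw [hsub, analyticOrderAt_neg]
  exact h x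

lemma refl (k : ℕ) (f : ℝ × Space m → ℝ) : AgreeToOrder k f f := fun x => by
  have : analyticOrderAt (fun t => f (t, x) - f (t, x)) 0 = ⊤ :=
    analyticOrderAt_eq_top.2 (.of_forall fun t => sub_self _)
  exact this ▸ le_top

protected lemma sum {ι : Type*} {s : Finset ι} {f g : ι → ℝ × Space m → ℝ}
    (h : ∀ i, AgreeToOrder k (f i) (g i)) : AgreeToOrder k (∑ i ∈ s, f i) (∑ i ∈ s, g i) :=
  sum_hom_rel (refl k 0) fun i _ _ hsum => (h i).add hsum

protected lemma mul (hε : 0 < ε) (hf : AgreeToOrder k f f') (hg : AgreeToOrder k g g')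
    (hf_an : AnalyticOnNhd ℝ f (slab m ε)) (hf_an' : AnalyticOnNhd ℝ f' (slab m ε))
    (hg_an : AnalyticOnNhd ℝ g (slab m ε)) (hg_an' : AnalyticOnNhd ℝ g' (slab m ε)) :
    AgreeToOrder k (f * g) (f' * g') := fun x => by
  have slice {h : ℝ × Space m → ℝ} (hh : AnalyticOnNhd ℝ h (slab m ε)) :
      AnalyticAt ℝ (fun t => h (t, x)) 0 := analyticAt_timeSlice (hh _ (zero_mk_mem_slab hε x))
  have hleft := analyticOrderAt_mul ((slice hf_an).sub (slice hf_an')) (slice hg_an)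
  have hright := analyticOrderAt_mul (slice hf_an') ((slice hg_an).sub (slice hg_an'))
  have hsub : (fun t => (f * g) (t, x) - (f' * g') (t, x)) =
      (fun t => f (t, x) - f' (t, x)) * (fun t => g (t, x)) +
        (fun t => f' (t, x)) * fun t => g (t, x) - g' (t, x) := by
    funext t
    simp only [Pi.add_apply, Pi.mul_apply]
    ring
  rw [hsub]
  refine (le_min ?_ ?_).trans le_analyticOrderAt_add
  · exact (hf x).trans (le_self_add.trans_eq hleft.symm)
  · exact (hg x).trans (le_add_self.trans_eq hright.symm)

lemma dirDeriv_space (hε : 0 < ε) (w : Space m) (h : AgreeToOrder k f g)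
    (hf : AnalyticOnNhd ℝ f (slab m ε)) (hg : AnalyticOnNhd ℝ g (slab m ε)) :
    AgreeToOrder k (dirDeriv (0, w) f) (dirDeriv (0, w) g) := by
  induction k generalizing f g with
  | zero => exact agreeToOrder_zero _ _
  | succ k ih =>
    obtain ⟨hinit, htime⟩ := (agreeToOrder_succ_iff hε hf hg).1 h
    refine (agreeToOrder_succ_iff hε (analyticOnNhd_dirDeriv hf _)
      (analyticOnNhd_dirDeriv hg _)).2 ⟨fun x => ?_, ?_⟩
    · rw [← dirDeriv_spaceSlice (hf _ (zero_mk_mem_slab hε x)).differentiableAt,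
        ← dirDeriv_spaceSlice (hg _ (zero_mk_mem_slab hε x)).differentiableAt]
      simp only [hinit]
    · exact (ih htime (analyticOnNhd_dirDeriv hf _) (analyticOnNhd_dirDeriv hg _)).congr hε
        (fun p hp => dirDeriv_comm (hf p hp) _ _) fun p hp => dirDeriv_comm (hg p hp) _ _

end AgreeToOrder

lemma eqOn_of_forall_agreeToOrder (hε : 0 < ε) (hf : AnalyticOnNhd ℝ f (slab m ε))
    (hg : AnalyticOnNhd ℝ g (slab m ε)) (h : ∀ k, AgreeToOrder k f g) :
    Set.EqOn f g (slab m ε) := by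
  rintro ⟨t, x⟩ ht
  have hline : AnalyticOnNhd ℝ (fun s => f (s, x) - g (s, x)) (Set.Ioo (-ε) ε) := fun s hs =>
    (analyticAt_timeSlice (hf (s, x) hs)).sub (analyticAt_timeSlice (hg (s, x) hs))
  have hzero : ∀ᶠ s in nhds (0 : ℝ), f (s, x) - g (s, x) = 0 :=
    analyticOrderAt_eq_top.1 (ENat.eq_top_iff_forall_ge.2 fun k => h k x)
  exact sub_eq_zero.1 (hline.eqOn_zero_of_preconnected_of_eventuallyEq_zero isPreconnected_Ioo
    (zero_mk_mem_slab hε x) hzero ht)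

/-- `φ` is the analytic periodic solution of `Δφ - φ + n = 0` on the slab. Periodicity is required
for all times, as in `IsAnalyticMEPSolution`. -/
structure IsHelmholtzPotential (ε : ℝ) (φ n : ℝ × Space m → ℝ) : Prop where
  analyticOnNhd : AnalyticOnNhd ℝ φ (slab m ε)
  periodic : ∀ t, IsLatticePeriodic fun x => φ (t, x)
  eqOn : Set.EqOn n (φ - ∑ i, dirDeriv (spaceDir i) (dirDeriv (spaceDir i) φ)) (slab m ε)

lemma isLatticePeriodic_dirDeriv_spaceSlice {f : ℝ × Space m → ℝ}
    (hf : ∀ t, IsLatticePeriodic fun x => f (t, x)) (w : ℝ × Space m) (t : ℝ) :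
    IsLatticePeriodic fun x => dirDeriv w f (t, x) := fun x z => by
  have htranslate : (fun p : ℝ × Space m => f (p + (0, lattice z))) = f := funext fun p => by
    rw [Prod.add_def, add_zero]
    exact hf p.1 p.2 z
  have hderiv := congr_fun (dirDeriv_comp_add_right f w (0, lattice z)) (t, x)
  rw [htranslate, Prod.mk_add_mk, add_zero] at hderiv
  exact hderiv.symm

namespace IsHelmholtzPotential

variable {φ φ' n n' : ℝ × Space m → ℝ}

lemma analyticOnNhd_second (h : IsHelmholtzPotential ε φ n) (w w' : ℝ × Space m) :
    AnalyticOnNhd ℝ (dirDeriv w (dirDeriv w' φ)) (slab m ε) :=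
  analyticOnNhd_dirDeriv (analyticOnNhd_dirDeriv h.analyticOnNhd w') w

protected lemma sub (h : IsHelmholtzPotential ε φ n) (h' : IsHelmholtzPotential ε φ' n') :
    IsHelmholtzPotential ε (φ - φ') (n - n') where
  analyticOnNhd := h.analyticOnNhd.sub h'.analyticOnNhd
  periodic t x z := congr_arg₂ (· - ·) (h.periodic t x z) (h'.periodic t x z)
  eqOn p hp := by
    have hsub (i : Fin m) : dirDeriv (spaceDir i) (dirDeriv (spaceDir i) (φ - φ')) p =
        dirDeriv (spaceDir i) (dirDeriv (spaceDir i) φ) p -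
          dirDeriv (spaceDir i) (dirDeriv (spaceDir i) φ') p := by
      rw [← dirDeriv_sub
        (analyticOnNhd_dirDeriv h.analyticOnNhd (spaceDir i) p hp).differentiableAt
        (analyticOnNhd_dirDeriv h'.analyticOnNhd (spaceDir i) p hp).differentiableAt]
      exact eqOn_dirDeriv isOpen_slab (fun q hq => dirDeriv_sub
        (h.analyticOnNhd q hq).differentiableAt (h'.analyticOnNhd q hq).differentiableAt _) _ hp
    simp only [Pi.sub_apply, Finset.sum_apply, h.eqOn hp, h'.eqOn hp, hsub, sum_sub_distrib]
    ring

protected lemma dirDeriv (h : IsHelmholtzPotential ε φ n) (w : ℝ × Space m) :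
    IsHelmholtzPotential ε (dirDeriv w φ) (dirDeriv w n) where
  analyticOnNhd := analyticOnNhd_dirDeriv h.analyticOnNhd w
  periodic := isLatticePeriodic_dirDeriv_spaceSlice h.periodic w
  eqOn p hp := by
    have hcomm (i : Fin m) : dirDeriv w (dirDeriv (spaceDir i) (dirDeriv (spaceDir i) φ)) p =
        dirDeriv (spaceDir i) (dirDeriv (spaceDir i) (dirDeriv w φ)) p :=
      (dirDeriv_comm (analyticOnNhd_dirDeriv h.analyticOnNhd _ p hp) _ _).trans <|
        eqOn_dirDeriv isOpen_slab (fun q hq => dirDeriv_comm (h.analyticOnNhd q hq) _ _) _ hp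
    have hsum : AnalyticAt ℝ (∑ i, dirDeriv (spaceDir i) (dirDeriv (spaceDir i) φ)) p :=
      analyticAt_sum _ fun i _ => h.analyticOnNhd_second _ _ p hp
    rw [eqOn_dirDeriv isOpen_slab h.eqOn w hp,
      dirDeriv_sub (h.analyticOnNhd p hp).differentiableAt hsum.differentiableAt,
      dirDeriv_sum fun i _ => (h.analyticOnNhd_second _ _ p hp).differentiableAt]
    simp only [Pi.sub_apply, Finset.sum_apply, hcomm]

lemma apply_eq_zero (h : IsHelmholtzPotential ε φ n) (ht : t ∈ Set.Ioo (-ε) ε)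
    (hn : ∀ x, n (t, x) = 0) (x : Space m) : φ (t, x) = 0 := by
  have hφ : ContDiff ℝ 2 fun y => φ (t, y) := contDiff_iff_contDiffAt.2 fun y =>
    ((h.analyticOnNhd (t, y) ht).comp (f := fun y : Space m => (t, y))
      (analyticAt_const.prod analyticAt_id)).contDiffAt
  refine eq_zero_of_sum_dirDeriv_dirDeriv_eq (s := univ)
    (e := fun i => EuclideanSpace.single i (1 : ℝ)) hφ (h.periodic t) (fun y => ?_) x
  have hslice (i : Fin m) (y : Space m) :
      dirDeriv (EuclideanSpace.single i 1) (fun y => φ (t, y)) y =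
        dirDeriv (spaceDir i) φ (t, y) :=
    dirDeriv_spaceSlice (h.analyticOnNhd (t, y) ht).differentiableAt _
  have hslice' (i : Fin m) : dirDeriv (EuclideanSpace.single i 1)
      (dirDeriv (EuclideanSpace.single i 1) fun y => φ (t, y)) y =
        dirDeriv (spaceDir i) (dirDeriv (spaceDir i) φ) (t, y) := by
    rw [funext (hslice i)]
    exact dirDeriv_spaceSlice
      (analyticOnNhd_dirDeriv h.analyticOnNhd _ (t, y) ht).differentiableAt _
  have heq := h.eqOn (show (t, y) ∈ slab m ε from ht)
  rw [hn, Pi.sub_apply, Finset.sum_apply] at heq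
  simp only [hslice']
  exact (sub_eq_zero.1 heq.symm).symm

lemma agreeToOrder (hε : 0 < ε) (h : IsHelmholtzPotential ε φ n)
    (h' : IsHelmholtzPotential ε φ' n') (hn : AnalyticOnNhd ℝ n (slab m ε))
    (hn' : AnalyticOnNhd ℝ n' (slab m ε)) (hk : AgreeToOrder k n n') : AgreeToOrder k φ φ' := by
  induction k generalizing φ φ' n n' with
  | zero => exact agreeToOrder_zero _ _
  | succ k ih =>
    obtain ⟨hinit, htime⟩ := (agreeToOrder_succ_iff hε hn hn').1 hk
    refine (agreeToOrder_succ_iff hε h.analyticOnNhd h'.analyticOnNhd).2 ⟨fun x => ?_, ?_⟩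
    · exact sub_eq_zero.1 ((h.sub h').apply_eq_zero (zero_mk_mem_slab hε x)
        (fun y => sub_eq_zero.2 (hinit y)) x)
    · exact ih (h.dirDeriv timeDir) (h'.dirDeriv timeDir) (analyticOnNhd_dirDeriv hn _)
        (analyticOnNhd_dirDeriv hn' _) htime

end IsHelmholtzPotential

section Solution

variable {n₀ : Space m → ℝ} {v₀ : Space m → Space m} {n n' φ φ' : ℝ × Space m → ℝ}
  {v v' : ℝ × Space m → Space m}

/-- The `j`-th component of a velocity field. -/
def component (v : ℝ × Space m → Space m) (j : Fin m) : ℝ × Space m → ℝ := fun p => v p j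

lemma analyticOnNhd_density (h : IsAnalyticMEPSolution m ε n₀ v₀ n φ v) :
    AnalyticOnNhd ℝ n (slab m ε) := fun p hp => (h.1 p hp).1

lemma analyticOnNhd_component (h : IsAnalyticMEPSolution m ε n₀ v₀ n φ v) (j : Fin m) :
    AnalyticOnNhd ℝ (component v j) (slab m ε) := fun p hp =>
  ((EuclideanSpace.proj j : Space m →L[ℝ] ℝ).analyticAt _).comp (h.1 p hp).2.1

lemma isHelmholtzPotential (h : IsAnalyticMEPSolution m ε n₀ v₀ n φ v) :
    IsHelmholtzPotential ε φ n where
  analyticOnNhd p hp := (h.1 p hp).2.2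
  periodic t x z := (h.2.1 t x z).2.2
  eqOn p hp := by
    rw [Pi.sub_apply, Finset.sum_apply]
    linarith [show ∑ i, dirDeriv (spaceDir i) (dirDeriv (spaceDir i) φ) p - φ p + n p = 0 from
      h.2.2.2.2.1 p hp]

lemma eqOn_dirDeriv_time_density (h : IsAnalyticMEPSolution m ε n₀ v₀ n φ v) :
    Set.EqOn (-∑ i, dirDeriv (spaceDir i) (n * component v i)) (dirDeriv timeDir n)
      (slab m ε) := fun p hp => by
  rw [Pi.neg_apply, Finset.sum_apply]
  exact (eq_neg_of_add_eq_zero_left (h.2.2.1 p hp)).symm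

lemma eqOn_dirDeriv_time_component (h : IsAnalyticMEPSolution m ε n₀ v₀ n φ v) (j : Fin m) :
    Set.EqOn (-(∑ i, component v i * dirDeriv (spaceDir i) (component v j) +
        dirDeriv (spaceDir j) φ))
      (dirDeriv timeDir (component v j)) (slab m ε) := fun p hp => by
  have heq := h.2.2.2.1 p hp j
  rw [map_zero_prodMk, add_assoc] at heq
  rw [Pi.neg_apply, Pi.add_apply, Finset.sum_apply]
  exact (eq_neg_of_add_eq_zero_left heq).symm

lemma agreeToOrder_dirDeriv_time_density (hε : 0 < ε)
    (h : IsAnalyticMEPSolution m ε n₀ v₀ n φ v) (h' : IsAnalyticMEPSolution m ε n₀ v₀ n' φ' v')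
    (hn : AgreeToOrder k n n') (hv : ∀ j, AgreeToOrder k (component v j) (component v' j)) :
    AgreeToOrder k (dirDeriv timeDir n) (dirDeriv timeDir n') := by
  have hn_an := analyticOnNhd_density h
  have hn_an' := analyticOnNhd_density h'
  have hv_an := analyticOnNhd_component h
  have hv_an' := analyticOnNhd_component h'
  have hflux (i) : AgreeToOrder k (dirDeriv (spaceDir i) (n * component v i))
      (dirDeriv (spaceDir i) (n' * component v' i)) :=
    (hn.mul hε (hv i) hn_an hn_an' (hv_an i) (hv_an' i)).dirDeriv_space hε _
      (hn_an.mul (hv_an i)) (hn_an'.mul (hv_an' i))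
  exact (AgreeToOrder.sum hflux).neg.congr hε (eqOn_dirDeriv_time_density h)
    (eqOn_dirDeriv_time_density h')

lemma agreeToOrder_dirDeriv_time_component (hε : 0 < ε)
    (h : IsAnalyticMEPSolution m ε n₀ v₀ n φ v) (h' : IsAnalyticMEPSolution m ε n₀ v₀ n' φ' v')
    (hn : AgreeToOrder k n n') (hv : ∀ j, AgreeToOrder k (component v j) (component v' j))
    (j : Fin m) :
    AgreeToOrder k (dirDeriv timeDir (component v j)) (dirDeriv timeDir (component v' j)) := by
  have hφ := isHelmholtzPotential h
  have hφ' := isHelmholtzPotential h'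
  have hv_an := analyticOnNhd_component h
  have hv_an' := analyticOnNhd_component h'
  have htransport (i) : AgreeToOrder k (component v i * dirDeriv (spaceDir i) (component v j))
      (component v' i * dirDeriv (spaceDir i) (component v' j)) :=
    (hv i).mul hε ((hv j).dirDeriv_space hε _ (hv_an j) (hv_an' j)) (hv_an i) (hv_an' i)
      (analyticOnNhd_dirDeriv (hv_an j) _) (analyticOnNhd_dirDeriv (hv_an' j) _)
  have hforce : AgreeToOrder k (dirDeriv (spaceDir j) φ) (dirDeriv (spaceDir j) φ') :=
    (hφ.agreeToOrder hε hφ' (analyticOnNhd_density h) (analyticOnNhd_density h') hn).dirDeriv_space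
      hε _ hφ.analyticOnNhd hφ'.analyticOnNhd
  exact ((AgreeToOrder.sum htransport).add hforce).neg.congr hε
    (eqOn_dirDeriv_time_component h j) (eqOn_dirDeriv_time_component h' j)

lemma agreeToOrder_solution (hε : 0 < ε) (h : IsAnalyticMEPSolution m ε n₀ v₀ n φ v)
    (h' : IsAnalyticMEPSolution m ε n₀ v₀ n' φ' v') (k : ℕ) :
    AgreeToOrder k n n' ∧ ∀ j, AgreeToOrder k (component v j) (component v' j) := by
  induction k with
  | zero => exact ⟨agreeToOrder_zero _ _, fun _ => agreeToOrder_zero _ _⟩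
  | succ k ih =>
    obtain ⟨hn, hv⟩ := ih
    have hinit (x) : n (0, x) = n' (0, x) ∧ v (0, x) = v' (0, x) :=
      ⟨(h.2.2.2.2.2 x).1.trans (h'.2.2.2.2.2 x).1.symm,
        (h.2.2.2.2.2 x).2.trans (h'.2.2.2.2.2 x).2.symm⟩
    refine ⟨(agreeToOrder_succ_iff hε (analyticOnNhd_density h) (analyticOnNhd_density h')).2
        ⟨fun x => (hinit x).1, agreeToOrder_dirDeriv_time_density hε h h' hn hv⟩, fun j => ?_⟩
    exact (agreeToOrder_succ_iff hε (analyticOnNhd_component h j) (analyticOnNhd_component h' j)).2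
      ⟨fun x => congr_arg (· j) (hinit x).2,
        agreeToOrder_dirDeriv_time_component hε h h' hn hv j⟩

theorem eq_of_isAnalyticMEPSolution (hε : 0 < ε) (h : IsAnalyticMEPSolution m ε n₀ v₀ n φ v)
    (h' : IsAnalyticMEPSolution m ε n₀ v₀ n' φ' v') {p : ℝ × Space m} (hp : p.1 ∈ Set.Ioo (-ε) ε) :
    n p = n' p ∧ v p = v' p := by
  have hagree := agreeToOrder_solution hε h h'
  exact ⟨eqOn_of_forall_agreeToOrder hε (analyticOnNhd_density h) (analyticOnNhd_density h')
      (fun k => (hagree k).1) hp,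
    PiLp.ext fun j => eqOn_of_forall_agreeToOrder hε (analyticOnNhd_component h j)
      (analyticOnNhd_component h' j) (fun k => (hagree k).2 j) hp⟩

end Solution

end Uniqueness

end ModifiedEulerPoisson

/-- Cauchy–Kowalevski type theorem for the modified Euler–Poisson equation:
for real-analytic `ℤ^m`-periodic initial data `(n₀, v₀)` there exist `ε > 0` and a
solution `(n, v, φ)` of the system `∂ₜn + div(nv) = 0`, `∂ₜv + (v·∇)v + grad φ = 0`,
`Δφ − φ + n = 0`, real-analytic in `(t, x)` on `(−ε, ε) × ℝ^m` and `ℤ^m`-periodic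
in `x`, taking the initial data `(n₀, v₀)` at `t = 0`; moreover the pair `(n, v)`
is unique among such real-analytic solutions. -/
theorem mEP_analytic_regularity (m : ℕ) (hm : 1 ≤ m)
    (n₀ : EuclideanSpace ℝ (Fin m) → ℝ)
    (v₀ : EuclideanSpace ℝ (Fin m) → EuclideanSpace ℝ (Fin m))
    (hn₀ : ∀ x, AnalyticAt ℝ n₀ x) (hv₀ : ∀ x, AnalyticAt ℝ v₀ x)
    (hn₀p : ∀ (x : EuclideanSpace ℝ (Fin m)) (z : Fin m → ℤ),
      n₀ (x + (WithLp.equiv 2 (Fin m → ℝ)).symm fun i => (z i : ℝ)) = n₀ x)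
    (hv₀p : ∀ (x : EuclideanSpace ℝ (Fin m)) (z : Fin m → ℤ),
      v₀ (x + (WithLp.equiv 2 (Fin m → ℝ)).symm fun i => (z i : ℝ)) = v₀ x) :
    ∃ ε > (0 : ℝ), ∃ (n φ : ℝ × EuclideanSpace ℝ (Fin m) → ℝ)
      (v : ℝ × EuclideanSpace ℝ (Fin m) → EuclideanSpace ℝ (Fin m)),
      IsAnalyticMEPSolution m ε n₀ v₀ n φ v ∧
      ∀ (n' φ' : ℝ × EuclideanSpace ℝ (Fin m) → ℝ)
        (v' : ℝ × EuclideanSpace ℝ (Fin m) → EuclideanSpace ℝ (Fin m)),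
        IsAnalyticMEPSolution m ε n₀ v₀ n' φ' v' →
        ∀ p : ℝ × EuclideanSpace ℝ (Fin m), p.1 ∈ Set.Ioo (-ε) ε →
          n' p = n p ∧ v' p = v p := by
  obtain ⟨ε, hε, n, φ, v, hsol⟩ :=
    ModifiedEulerPoisson.exists_isAnalyticMEPSolution hn₀ hv₀ hn₀p hv₀p
  exact ⟨ε, hε, n, φ, v, hsol, fun n' φ' v' hsol' p hp =>
    ModifiedEulerPoisson.eq_of_isAnalyticMEPSolution hε hsol' hsol hp⟩
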